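/- Let X be a set and let R be a set of nonempty reduced, cyclically reduced words over X that is symmetrized, i.e. closed under taking cyclic conjugates and under taking inverse words. Suppose R satisfies the small-cancellation condition C(6): no element of R can be written as the concatenation of fewer than 6 pieces. Let A ⊆ X and suppose there do not exist words Q and S such that S uses only letters of A, the concatenation Q·S belongs to R, and Q is a concatenation of at most 3 pieces. Then the homomorphism from the free group on A to the group G = ⟨X ∣ R⟩ induced by the inclusion A ↪ X is injective. -/

import Mathlib

/-- A word over the alphabet `α` (a list of letters with exponents `±1`) is *reduced*
if it contains no adjacent pair of the form `(s, e) (s, ¬e)`. -/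
def WordReduced {α : Type*} (w : List (α × Bool)) : Prop :=
  List.Chain' (fun p q => ¬(p.1 = q.1 ∧ p.2 = !q.2)) w

/-- A word is *cyclically reduced* if it is reduced and, in addition, its last letter
is not the inverse of its first letter. -/
def WordCyclicallyReduced {α : Type*} (w : List (α × Bool)) : Prop :=
  WordReduced w ∧
    ∀ x ∈ w.getLast?, ∀ y ∈ w.head?, ¬(x.1 = (y : α × Bool).1 ∧ x.2 = !y.2)

/-- The inverse of a word: reverse the list and negate each exponent. -/
def wordInv {α : Type*} (w : List (α × Bool)) : List (α × Bool) :=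
  (w.map fun p => (p.1, !p.2)).reverse

/-- A set of words is *symmetrized* if it is closed under taking cyclic conjugates
(rotations) and under taking inverse words. -/
def Symmetrized {α : Type*} (R : Set (List (α × Bool))) : Prop :=
  (∀ u ∈ R, ∀ v, u ~r v → v ∈ R) ∧ (∀ u ∈ R, wordInv u ∈ R)

/-- A *piece* relative to a symmetrized set `R` is a nonempty word occurring as a
prefix of two distinct elements of `R`. -/
def IsPiece {α : Type*} (R : Set (List (α × Bool))) (u : List (α × Bool)) : Prop :=
  u ≠ [] ∧ ∃ v w, v ∈ R ∧ w ∈ R ∧ v ≠ w ∧ u <+: v ∧ u <+: w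

/-- A symmetrized set `R` satisfies the small-cancellation condition `C(q)` if no
element of `R` is the concatenation of fewer than `q` pieces. -/
def SmallCancellationC {α : Type*} (q : ℕ) (R : Set (List (α × Bool))) : Prop :=
  ∀ w ∈ R, ∀ L : List (List (α × Bool)),
    (∀ u ∈ L, IsPiece R u) → L.flatten = w → q ≤ L.length

/-!
A word over `A` that is trivial in `⟨X ∣ R⟩` is the boundary label of a planar diagram whose inner
faces are labelled by relators. Starting from a nontrivial word over `A`, take such a diagram with
as few edges as possible, where faces labelled by trivial words are also allowed. By minimality no
edge can be folded and no two neighbouring inner faces can be merged, so a maximal arc between two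
inner faces is a piece, while an arc on the outer boundary is a word over `A`.

Then weigh the darts. Give an inner dart ending at a vertex of degree at least three weight `1`, or
`2` if it runs along the outer boundary: the hypotheses on `R` and `A` show that the darts of every
inner face weigh at least `6`. Every vertex of degree two gets `3` from each of its darts, and every
other vertex gets `2`, so again at least `6`. Summing these bounds contradicts Euler's formula.
-/

namespace SmallCancellation

open Equiv

section CycleLists

variable {D D' : Type*} {σ τ : Perm D} {x y a b : D} {l l' s t u v : List D}

/-- The list `l` runs through one cycle of `σ` in the order in which `σ` visits it: the boundary
of a face, read off from some starting point. The empty list qualifies. -/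
def IsCycleList (σ : Perm D) (l : List D) : Prop :=
  l.Nodup ∧ Cycle.Chain (fun x y => σ x = y) (l : Cycle D)

theorem isCycleList_nil : IsCycleList σ [] := ⟨List.nodup_nil, trivial⟩

theorem isCycleList_cons :
    IsCycleList σ (a :: l) ↔
      (a :: l).Nodup ∧ List.IsChain (fun x y => σ x = y) (a :: (l ++ [a])) := by
  rw [IsCycleList, Cycle.chain_coe_cons]

theorem isCycleList_singleton : IsCycleList σ [a] ↔ σ a = a := by
  simp [isCycleList_cons]

theorem exists_isCycleList [Finite D] (σ : Perm D) (x : D) : ∃ l, IsCycleList σ (x :: l) := by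
  have hx : x ∈ Function.periodicOrbit σ x :=
    Function.self_mem_periodicOrbit (σ.injective.mem_periodicPts x)
  obtain ⟨l, hl⟩ : ∃ l : List D, (l : Cycle D) = Function.periodicOrbit σ x := Quot.exists_rep _
  rw [← hl, Cycle.mem_coe_iff] at hx
  obtain ⟨l₁, l₂, rfl⟩ := List.append_of_mem hx
  have hrot : ((x :: (l₂ ++ l₁) : List D) : Cycle D) = Function.periodicOrbit σ x := by
    rw [← hl, Cycle.coe_eq_coe, ← List.cons_append]
    exact List.isRotated_append
  refine ⟨l₂ ++ l₁, ?_, ?_⟩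
  · rw [← Cycle.nodup_coe_iff, hrot]
    exact Function.nodup_periodicOrbit
  · rw [hrot, Function.periodicOrbit_chain' _ (σ.injective.mem_periodicPts x)]
    simp [Function.iterate_succ_apply']

namespace IsCycleList

theorem isRotated (hl : IsCycleList σ l) (h : l ~r l') : IsCycleList σ l' :=
  ⟨h.nodup_iff.1 hl.1, (Cycle.coe_eq_coe.2 h) ▸ hl.2⟩

theorem append_comm (hl : IsCycleList σ (s ++ t)) : IsCycleList σ (t ++ s) :=
  hl.isRotated List.isRotated_append

theorem exists_cons (hl : IsCycleList σ l) (hx : x ∈ l) :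
    ∃ t, l ~r x :: t ∧ IsCycleList σ (x :: t) := by
  obtain ⟨l₁, l₂, rfl⟩ := List.append_of_mem hx
  exact ⟨l₂ ++ l₁, List.isRotated_append, hl.append_comm⟩

theorem apply_eq (hl : IsCycleList σ (x :: y :: t)) : σ x = y :=
  (List.isChain_cons_cons.1 (isCycleList_cons.1 hl).2).1

theorem apply_mem (hl : IsCycleList σ l) (hx : x ∈ l) : σ x ∈ l := by
  obtain ⟨t, hrot, ht⟩ := hl.exists_cons hx
  rw [hrot.mem_iff]
  cases t with
  | nil => simp [isCycleList_singleton.1 ht]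
  | cons y t => simp [ht.apply_eq]

theorem sameCycle (hl : IsCycleList σ l) (hx : x ∈ l) (hy : y ∈ l) : σ.SameCycle x y := by
  have : IsTrans D σ.SameCycle := ⟨fun _ _ _ => Perm.SameCycle.trans⟩
  refine Cycle.chain_iff_pairwise.1 (Cycle.Chain.imp ?_ hl.2) x hx y hy
  rintro a _ rfl
  exact Perm.sameCycle_apply_right.2 (Perm.SameCycle.refl _ _)

theorem forall_mem {P : D → Prop} (hl : IsCycleList σ l) (hσ : ∀ x, ¬ P x → σ x = x)
    (hx : x ∈ l) (hPx : P x) : ∀ y ∈ l, P y := fun y hy => by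
  by_contra hPy
  exact hPy ((hl.sameCycle hy hx).eq_of_left (hσ y hPy) ▸ hPx)

theorem apply_mem_iff (hl : IsCycleList σ l) : σ x ∈ l ↔ x ∈ l := by
  refine ⟨fun h => ?_, hl.apply_mem⟩
  obtain ⟨t, hrot, ht⟩ := hl.exists_cons h
  rw [hrot.mem_iff]
  cases t using List.reverseRecOn with
  | nil => simp [σ.injective (isCycleList_singleton.1 ht)]
  | append_singleton s y =>
    simp [σ.injective (ht.append_comm (s := σ x :: s) (t := [y])).apply_eq]

theorem mem_iff_of_sameCycle (hl : IsCycleList σ l) (h : σ.SameCycle x y) : x ∈ l ↔ y ∈ l := by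
  obtain ⟨i, rfl⟩ := h
  induction i with
  | zero => rfl
  | succ i ih => rw [ih, add_comm, zpow_add, zpow_one, Perm.mul_apply, hl.apply_mem_iff]
  | pred i ih =>
    rw [ih, ← hl.apply_mem_iff (x := (σ ^ (-(i : ℤ) - 1)) x), ← Perm.mul_apply, ← zpow_one_add,
      add_sub_cancel]

theorem congr (hl : IsCycleList σ l) (h : ∀ x ∈ l, τ x = σ x) : IsCycleList τ l := by
  cases l with
  | nil => exact isCycleList_nil
  | cons a l =>
    rw [isCycleList_cons] at hl ⊢
    refine ⟨hl.1, hl.2.imp_of_mem_imp fun x y hx _ hxy => ?_⟩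
    rw [h x (by simpa [or_comm] using hx), hxy]

theorem map {τ : Perm D'} {g : D → D'} (hg : Function.Injective g)
    (h : ∀ x, τ (g x) = g (σ x)) (hl : IsCycleList σ l) : IsCycleList τ (l.map g) := by
  refine ⟨hl.1.map hg, ?_⟩
  rw [← Cycle.map_coe, Cycle.chain_map]
  exact Cycle.Chain.imp (fun a b hab => by rw [h, hab]) hl.2

theorem inv (hl : IsCycleList σ l) : IsCycleList σ⁻¹ l.reverse := by
  cases l with
  | nil => exact isCycleList_nil
  | cons a l =>
    rw [isCycleList_cons] at hl
    rw [List.reverse_cons]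
    refine append_comm (s := [a]) (isCycleList_cons.2 ⟨by simpa using hl.1, ?_⟩)
    rw [← List.isChain_reverse] at hl
    simpa [Equiv.eq_symm_apply, eq_comm] using hl.2

theorem isChain (hl : IsCycleList σ l) : l.IsChain fun x y => σ x = y := by
  cases l with
  | nil => exact List.isChain_nil
  | cons a l => exact (isCycleList_cons.1 hl).2.left_of_append (l₁ := a :: l)

theorem isPrefix (hl : IsCycleList σ (x :: l)) (hc : (x :: s).IsChain (fun x y => σ x = y))
    (hx : x ∉ s) : s <+: l := by
  have hcomparable : ∀ {s t : List D} {x : D}, (x :: s).IsChain (fun x y => σ x = y) →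
      (x :: t).IsChain (fun x y => σ x = y) → s <+: t ∨ t <+: s := by
    intro s t x hs ht
    induction s generalizing t x with
    | nil => exact Or.inl List.nil_prefix
    | cons a s ih =>
      cases t with
      | nil => exact Or.inr List.nil_prefix
      | cons b t =>
        obtain ⟨rfl, hs⟩ := List.isChain_cons_cons.1 hs
        obtain ⟨rfl, ht⟩ := List.isChain_cons_cons.1 ht
        simpa [List.cons_prefix_cons] using ih hs ht
  rcases hcomparable hc (isCycleList_cons.1 hl).2 with h | h
  · refine (List.prefix_concat_iff.1 h).resolve_left fun h => hx ?_
    simp [h]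
  · exact absurd (h.subset (by simp)) hx

theorem eq (hl : IsCycleList σ (x :: l)) (hl' : IsCycleList σ (x :: l')) : l = l' := by
  have hprefix := hl'.isPrefix hl.isChain (List.nodup_cons.1 hl.1).1
  have hprefix' := hl.isPrefix hl'.isChain (List.nodup_cons.1 hl'.1).1
  exact hprefix.eq_of_length_le hprefix'.length_le

theorem isRotated_of_mem (hl : IsCycleList σ l) (hl' : IsCycleList σ l') (hx : x ∈ l)
    (hx' : x ∈ l') : l ~r l' := by
  obtain ⟨t, hrot, ht⟩ := hl.exists_cons hx
  obtain ⟨t', hrot', ht'⟩ := hl'.exists_cons hx'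
  exact hrot.trans (ht.eq ht' ▸ hrot'.symm)

end IsCycleList

variable [DecidableEq D]

theorem isChain_swap_mul (h : List.IsChain (fun x y => σ x = y) (x :: (s ++ [a])))
    (ha : a ∉ s) (hb : b ∉ s) :
    List.IsChain (fun x y => (swap a b * σ) x = y) (x :: (s ++ [b])) := by
  induction s generalizing x with
  | nil => simp_all
  | cons y s ih =>
    simp only [List.mem_cons, not_or] at ha hb
    rw [List.cons_append, List.isChain_cons_cons] at h ⊢
    refine ⟨?_, ih h.2 ha.2 hb.2⟩
    rw [Perm.mul_apply, h.1, swap_apply_of_ne_of_ne (Ne.symm ha.1) (Ne.symm hb.1)]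

theorem IsCycleList.split (hl : IsCycleList σ (x :: (u ++ y :: v))) :
    IsCycleList (swap x y * σ) (x :: u) := by
  rw [isCycleList_cons] at hl
  obtain ⟨hnodup, hchain⟩ := hl
  have hx : x ∉ u := by simp_all
  have hy : y ∉ u := fun h => by simp_all [List.nodup_middle]
  refine isCycleList_cons.2 ⟨hnodup.sublist (by simp), ?_⟩
  rw [swap_comm]
  refine isChain_swap_mul (List.IsChain.infix hchain ⟨[], v ++ [x], by simp⟩) hy hx

theorem IsCycleList.join (hs : IsCycleList σ (a :: s)) (ht : IsCycleList σ (b :: t))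
    (hst : (a :: s).Disjoint (b :: t)) : IsCycleList (swap a b * σ) (a :: s ++ b :: t) := by
  refine isCycleList_cons.2 ⟨List.nodup_append'.2 ⟨hs.1, ht.1, hst⟩, ?_⟩
  have hs' := isChain_swap_mul (b := b) (isCycleList_cons.1 hs).2 (List.nodup_cons.1 hs.1).1
    fun h => hst (List.mem_cons_of_mem a h) List.mem_cons_self
  have ht' := isChain_swap_mul (b := a) (isCycleList_cons.1 ht).2 (List.nodup_cons.1 ht.1).1
    fun h => hst List.mem_cons_self (List.mem_cons_of_mem b h)
  rw [swap_comm] at ht'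
  rw [← List.cons_append] at hs' ht'
  simpa using List.isChain_split.2 ⟨hs', ht'⟩

/-- The permutation obtained from `σ` by cutting `a` out of its cycle. -/
def skip (a : D) (σ : Perm D) : Perm D := swap a (σ a) * σ

theorem skip_self : skip a σ a = a := by simp [skip]

theorem skip_of_apply_eq (h : σ x = a) : skip a σ x = σ a := by simp [skip, h]

theorem skip_of_ne (hx : x ≠ a) (hσ : σ x ≠ a) : skip a σ x = σ x :=
  swap_apply_of_ne_of_ne hσ (σ.injective.ne hx)

theorem skip_of_fixed (h : σ x = x) : skip a σ x = x := by
  by_cases hx : x = a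
  · rw [hx, skip_self]
  · rw [skip_of_ne hx (by rwa [h]), h]

theorem IsCycleList.skip_of_notMem (hl : IsCycleList σ l) (ha : a ∉ l) :
    IsCycleList (skip a σ) l :=
  hl.congr fun _ hx => skip_of_ne (fun h => ha (h ▸ hx)) fun h => ha (h ▸ hl.apply_mem hx)

theorem IsCycleList.skip_head (hl : IsCycleList σ (a :: t)) : IsCycleList (skip a σ) t := by
  cases t with
  | nil => exact isCycleList_nil
  | cons y t =>
    rw [skip, hl.apply_eq, swap_comm]
    exact (hl.append_comm (s := [a]) (t := y :: t)).split

end CycleLists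

section CountingClasses

variable {α : Type*} [Finite α] {r s : Setoid α} {x y : α}

theorem card_quotient_le_of_le (h : r ≤ s) : Nat.card (Quotient s) ≤ Nat.card (Quotient r) :=
  Nat.card_le_card_of_surjective (Quotient.map' id h) fun q =>
    q.inductionOn fun a => ⟨Quotient.mk r a, rfl⟩

theorem card_quotient_lt_of_le (h : r ≤ s) (hs : s x y) (hr : ¬ r x y) :
    Nat.card (Quotient s) < Nat.card (Quotient r) := by
  have hsurj : Function.Surjective (Quotient.map' id h : Quotient r → Quotient s) := fun q =>
    q.inductionOn fun a => ⟨Quotient.mk r a, rfl⟩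
  refine not_le.1 fun hcard => hr (Quotient.exact ?_)
  exact (hsurj.bijective_of_nat_card_le hcard).injective (Quotient.sound hs)

theorem card_quotient_le_succ (h : ∀ t, r ≤ t → t x y → s ≤ t) :
    Nat.card (Quotient r) ≤ Nat.card (Quotient s) + 1 := by
  classical
  let collapse : α → Quotient r := fun a =>
    if Quotient.mk r a = Quotient.mk r y then Quotient.mk r x else Quotient.mk r a
  have hle : s ≤ Setoid.ker collapse := by
    refine h _ (fun a b hab => ?_) ?_
    · have : Quotient.mk r a = Quotient.mk r b := Quotient.sound hab
      simp only [Setoid.ker_def, collapse, this]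
    · simp [Setoid.ker_def, collapse]
  rw [← Finite.card_option]
  refine Nat.card_le_card_of_surjective
    (fun o => o.elim (Quotient.mk r y) (Quotient.lift collapse fun _ _ hab => hle hab)) ?_
  refine fun q => q.inductionOn fun a => ?_
  by_cases ha : Quotient.mk r a = Quotient.mk r y
  · exact ⟨none, ha.symm⟩
  · exact ⟨some (Quotient.mk s a), if_neg ha⟩

end CountingClasses

section CycleCount

variable {D : Type*} {σ : Perm D} {x y : D}

/-- The number of cycles of `σ`, fixed points included: the number of vertices, edges or faces
of a combinatorial map. -/
noncomputable def cycleCount (σ : Perm D) : ℕ := Nat.card (Quotient (Perm.SameCycle.setoid σ))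

theorem setoid_le_iff {r : Setoid D} : Perm.SameCycle.setoid σ ≤ r ↔ ∀ z, r z (σ z) := by
  refine ⟨fun h z => h (Perm.sameCycle_apply_right.2 (Perm.SameCycle.refl σ z)), ?_⟩
  intro h z w hzw
  obtain ⟨i, rfl⟩ := hzw
  induction i with
  | zero => exact r.refl z
  | succ i ih => exact r.trans ih (by rw [add_comm, zpow_one_add]; exact h _)
  | pred i ih =>
    refine r.trans ih (r.symm ?_)
    simpa [← Perm.mul_apply, ← zpow_one_add] using h ((σ ^ (-(i : ℤ) - 1)) z)

theorem setoid_inv (σ : Perm D) : Perm.SameCycle.setoid σ⁻¹ = Perm.SameCycle.setoid σ :=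
  Setoid.ext fun _ _ => Perm.sameCycle_inv

theorem cycleCount_inv (σ : Perm D) : cycleCount σ⁻¹ = cycleCount σ := by
  rw [cycleCount, setoid_inv, cycleCount]

theorem cycleCount_conj (σ τ : Perm D) : cycleCount (τ * σ * τ⁻¹) = cycleCount σ :=
  (Nat.card_congr (Quotient.congr τ fun a b => by
    change σ.SameCycle a b ↔ (τ * σ * τ⁻¹).SameCycle (τ a) (τ b)
    simp [Perm.sameCycle_conj])).symm

theorem cycleCount_mul_comm (σ τ : Perm D) : cycleCount (σ * τ) = cycleCount (τ * σ) := by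
  rw [← cycleCount_conj (σ * τ) τ]
  simp [mul_assoc]

variable [DecidableEq D]

theorem setoid_swap_mul_le {r : Setoid D} (h : Perm.SameCycle.setoid σ ≤ r) (hxy : r x y) :
    Perm.SameCycle.setoid (swap x y * σ) ≤ r := by
  rw [setoid_le_iff] at h ⊢
  refine fun z => r.trans (h z) ?_
  rw [Perm.mul_apply, swap_apply_def]
  split_ifs with hx hy
  · rwa [hx]
  · rw [hy]
    exact r.symm hxy
  · exact r.refl _

theorem mul_swap_mul (σ τ : Perm D) (x y : D) :
    σ * (swap x y * τ) = swap (σ x) (σ y) * (σ * τ) := by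
  rw [← mul_assoc, mul_swap_eq_swap_mul, mul_assoc]

variable [Finite D]

theorem not_sameCycle_swap_mul (h : σ.SameCycle x y) (hxy : x ≠ y) :
    ¬ (swap x y * σ).SameCycle x y := by
  obtain ⟨l, hl⟩ := exists_isCycleList σ x
  have hy : y ∈ l := List.mem_of_ne_of_mem hxy.symm
    ((hl.mem_iff_of_sameCycle h).1 List.mem_cons_self)
  obtain ⟨u, v, rfl⟩ := List.append_of_mem hy
  intro h'
  have hyu : y ∈ x :: u := (hl.split.mem_iff_of_sameCycle h').1 List.mem_cons_self
  have hnodup := hl.1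
  rw [← List.cons_append, List.nodup_middle] at hnodup
  exact (List.nodup_cons.1 hnodup).1 (List.mem_append_left v hyu)

theorem sameCycle_swap_mul (h : ¬ σ.SameCycle x y) : (swap x y * σ).SameCycle x y := by
  obtain ⟨s, hs⟩ := exists_isCycleList σ x
  obtain ⟨t, ht⟩ := exists_isCycleList σ y
  refine (hs.join ht fun z hzs hzt => h ?_).sameCycle (by simp) (by simp)
  exact (hs.sameCycle List.mem_cons_self hzs).trans (ht.sameCycle hzt List.mem_cons_self)

theorem setoid_le_setoid_swap_mul (h : ¬ σ.SameCycle x y) :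
    Perm.SameCycle.setoid σ ≤ Perm.SameCycle.setoid (swap x y * σ) := by
  conv_lhs => rw [← swap_mul_self_mul x y σ]
  exact setoid_swap_mul_le le_rfl (sameCycle_swap_mul h)

theorem cycleCount_le_swap_mul (σ : Perm D) (x y : D) :
    cycleCount σ ≤ cycleCount (swap x y * σ) + 1 :=
  card_quotient_le_succ fun _ => setoid_swap_mul_le

theorem cycleCount_swap_mul_lt (h : ¬ σ.SameCycle x y) :
    cycleCount (swap x y * σ) < cycleCount σ :=
  card_quotient_lt_of_le (setoid_le_setoid_swap_mul h) (sameCycle_swap_mul h) h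

theorem cycleCount_lt_swap_mul (h : σ.SameCycle x y) (hxy : x ≠ y) :
    cycleCount σ < cycleCount (swap x y * σ) := by
  simpa only [swap_mul_self_mul] using cycleCount_swap_mul_lt (not_sameCycle_swap_mul h hxy)

end CycleCount

section Planarity

variable {D : Type*} {e f : Perm D} {x y : D}

/-- The relation of lying in the same connected component of the combinatorial map on the set of
darts `D` whose edges and faces are the cycles of `e` and `f`. -/
def component (e f : Perm D) : Setoid D := Perm.SameCycle.setoid e ⊔ Perm.SameCycle.setoid f

/-- The combinatorial map with edge permutation `e`, face permutation `f` and vertex permutation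
`e * f` has genus zero. By Euler's formula `V - E + F = 2` per component; as `E` is the number of
cycles of `e`, the number `|D| - E` of edges of an involution without fixed points is written so
that the three permutations play symmetric roles. -/
def Planar (e f : Perm D) : Prop :=
  Nat.card D + 2 * Nat.card (Quotient (component e f)) ≤
    cycleCount e + cycleCount f + cycleCount (e * f)

theorem component_le_iff {r : Setoid D} :
    component e f ≤ r ↔ (∀ z, r z (e z)) ∧ ∀ z, r z (f z) := by
  rw [component, sup_le_iff, setoid_le_iff, setoid_le_iff]

theorem component_edge (e f : Perm D) (z : D) : component e f z (e z) :=
  (component_le_iff.1 le_rfl).1 z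

theorem component_face (e f : Perm D) (z : D) : component e f z (f z) :=
  (component_le_iff.1 le_rfl).2 z

theorem component_comm (e f : Perm D) : component e f = component f e := sup_comm _ _

theorem component_mul_inv (e f : Perm D) : component (e * f) f⁻¹ = component e f := by
  have hinv (z : D) : component e f z (f⁻¹ z) := by
    simpa using (component e f).symm (component_face e f (f⁻¹ z))
  have hinv' (z : D) : component (e * f) f⁻¹ z (f z) := by
    simpa using (component (e * f) f⁻¹).symm (component_face (e * f) f⁻¹ (f z))
  refine le_antisymm (component_le_iff.2 ⟨fun z => ?_, hinv⟩)
    (component_le_iff.2 ⟨fun z => ?_, hinv'⟩)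
  · exact (component e f).trans (component_face e f z) (component_edge e f (f z))
  · have h := component_edge (e * f) f⁻¹ (f⁻¹ z)
    simp only [Perm.mul_apply, Perm.inv_def, apply_symm_apply] at h
    exact (component (e * f) f⁻¹).trans (component_face (e * f) f⁻¹ z) h

theorem component_inv (e f : Perm D) : component e⁻¹ f⁻¹ = component e f := by
  rw [component, setoid_inv, setoid_inv, component]

theorem sameCycle_setoid_le_component : Perm.SameCycle.setoid (e * f) ≤ component e f := by
  rw [← component_mul_inv]
  exact le_sup_left

namespace Planar

theorem comm (h : Planar e f) : Planar f e := by
  rw [Planar] at h ⊢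
  rw [component_comm, cycleCount_mul_comm]
  omega

theorem mul_inv (h : Planar e f) : Planar (e * f) f⁻¹ := by
  rw [Planar] at h ⊢
  rw [component_mul_inv, cycleCount_inv, mul_inv_cancel_right]
  omega

theorem inv (h : Planar e f) : Planar f⁻¹ e⁻¹ := by
  rw [Planar] at h ⊢
  rw [← mul_inv_rev, component_inv, component_comm]
  simp only [cycleCount_inv]
  omega

variable [Finite D] [DecidableEq D]

theorem swap_mul_of_sameCycle (h : Planar e f) (hf : f.SameCycle x y) :
    Planar e (swap x y * f) := by
  rcases eq_or_ne x y with rfl | hxy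
  · rwa [swap_self, ← Perm.one_def, one_mul]
  rw [Planar] at h ⊢
  have hface := cycleCount_lt_swap_mul hf hxy
  have hcomponent (r : Setoid D) (hr : component e (swap x y * f) ≤ r) (hxy : r x y) :
      component e f ≤ r := by
    rw [component, sup_le_iff] at hr
    refine sup_le hr.1 ?_
    rw [← swap_mul_self_mul x y f]
    exact setoid_swap_mul_le hr.2 hxy
  by_cases hc : component e (swap x y * f) x y
  · have hcard := card_quotient_le_of_le (hcomponent _ le_rfl hc)
    have hvertex := cycleCount_le_swap_mul (e * f) (e x) (e y)
    rw [mul_swap_mul]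
    omega
  · have hcard := card_quotient_le_succ hcomponent
    have hvertex : cycleCount (e * f) < cycleCount (swap (e x) (e y) * (e * f)) := by
      have hlt := cycleCount_swap_mul_lt (σ := e * (swap x y * f)) (x := e x) (y := e y)
        fun hn => hc <| (component e _).trans (component_edge e _ x) <|
          (component e _).trans (sameCycle_setoid_le_component hn)
            ((component e _).symm (component_edge e _ y))
      rwa [mul_swap_mul, swap_mul_self_mul] at hlt
    rw [mul_swap_mul]
    omega

theorem mul_swap_of_sameCycle_face (h : Planar e f) (hf : f.SameCycle x y) :
    Planar (e * swap x y) (swap x y * f) := by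
  have hinv : (swap x y * f)⁻¹ = swap (f⁻¹ x) (f⁻¹ y) * f⁻¹ := by
    rw [mul_inv_rev, swap_inv, mul_swap_eq_swap_mul]
  have hface : f⁻¹.SameCycle (f⁻¹ x) (f⁻¹ y) := by
    rw [Perm.sameCycle_apply_left, Perm.sameCycle_apply_right, Perm.sameCycle_inv]
    exact hf
  have hvertex := (h.mul_inv.swap_mul_of_sameCycle hface).mul_inv
  rw [← hinv, inv_inv] at hvertex
  convert hvertex using 1
  rw [mul_inv_rev, swap_inv, ← mul_assoc, mul_inv_cancel_right]

theorem mul_swap_of_sameCycle_edge (h : Planar e f) (he : e.SameCycle x y) :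
    Planar (e * swap x y) (swap x y * f) := by
  simpa only [mul_inv_rev, swap_inv, inv_inv] using
    (h.inv.mul_swap_of_sameCycle_face he.inv).inv

theorem swap_mul_of_not_component (h : Planar e f) (hxy : ¬ component e f x y) :
    Planar e (swap x y * f) := by
  have hf : ¬ f.SameCycle x y := fun hf => hxy (le_sup_right (a := Perm.SameCycle.setoid e) hf)
  have hle : component e f ≤ component e (swap x y * f) :=
    sup_le_sup_left (setoid_le_setoid_swap_mul hf) _
  have hxy' : component e (swap x y * f) x y :=
    le_sup_right (a := Perm.SameCycle.setoid e) (sameCycle_swap_mul hf)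
  have hcard := card_quotient_lt_of_le hle hxy' hxy
  have hface := cycleCount_le_swap_mul f x y
  have hvertex := cycleCount_le_swap_mul (e * f) (e x) (e y)
  rw [Planar] at h ⊢
  rw [mul_swap_mul]
  omega

theorem skip_face (h : Planar e f) (a : D) : Planar e (skip a f) :=
  h.swap_mul_of_sameCycle (Perm.sameCycle_apply_right.2 (Perm.SameCycle.refl _ _))

theorem skip_edge (h : Planar e f) (a : D) : Planar (skip a e) f :=
  (h.comm.skip_face a).comm

end Planar

end Planarity

section DisjointSums

theorem card_le_card_quotient {α γ : Type*} [Finite α] {r : Setoid α} {g : α → γ}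
    (hg : Function.Surjective g) (h : r ≤ Setoid.ker g) : Nat.card γ ≤ Nat.card (Quotient r) :=
  Nat.card_le_card_of_surjective (Quotient.lift g fun _ _ hab => h hab)
    fun c => by
    obtain ⟨a, rfl⟩ := hg c
    exact ⟨Quotient.mk r a, rfl⟩

theorem card_le_cycleCount {D γ : Type*} [Finite D] {σ : Perm D} {g : D → γ}
    (hg : Function.Surjective g) (h : ∀ x, g (σ x) = g x) : Nat.card γ ≤ cycleCount σ :=
  card_le_card_quotient hg (setoid_le_iff.2 fun x => (h x).symm)

theorem card_quotient_component_le_one {D : Type*} [Finite D] {e f : Perm D} {o : D}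
    (h : ∀ x, component e f o x) : Nat.card (Quotient (component e f)) ≤ 1 :=
  Finite.card_le_one_iff_subsingleton.2 ⟨fun p q => p.inductionOn₂ q fun x y =>
    Quotient.sound ((component e f).trans ((component e f).symm (h x)) (h y))⟩

theorem not_component_sumCongr {D₁ D₂ : Type*} (e₁ f₁ : Perm D₁) (e₂ f₂ : Perm D₂) (x : D₁)
    (y : D₂) :
    ¬ component (Perm.sumCongr e₁ e₂) (Perm.sumCongr f₁ f₂) (Sum.inl x) (Sum.inr y) := by
  intro h
  have hle : component (Perm.sumCongr e₁ e₂) (Perm.sumCongr f₁ f₂) ≤ Setoid.ker Sum.isLeft := by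
    refine component_le_iff.2 ⟨?_, ?_⟩ <;> rintro (z | z) <;> rfl
  simpa [Setoid.ker_def] using hle h

variable {D₁ D₂ : Type*} [Finite D₁] [Finite D₂]

theorem cycleCount_add_le_sumCongr (σ : Perm D₁) (τ : Perm D₂) :
    cycleCount σ + cycleCount τ ≤ cycleCount (Perm.sumCongr σ τ) := by
  rw [cycleCount, cycleCount, ← Nat.card_sum]
  refine card_le_cycleCount (g := Sum.map (Quotient.mk _) (Quotient.mk _))
    (Quotient.mk_surjective.sumMap Quotient.mk_surjective) ?_
  rintro (x | x)
  · exact congrArg Sum.inl (Quotient.sound (Perm.sameCycle_apply_left.2 (Perm.SameCycle.refl _ _)))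
  · exact congrArg Sum.inr (Quotient.sound (Perm.sameCycle_apply_left.2 (Perm.SameCycle.refl _ _)))

theorem card_quotient_component_sumCongr_le (e₁ f₁ : Perm D₁) (e₂ f₂ : Perm D₂) :
    Nat.card (Quotient (component (Perm.sumCongr e₁ e₂) (Perm.sumCongr f₁ f₂))) ≤
      Nat.card (Quotient (component e₁ f₁)) + Nat.card (Quotient (component e₂ f₂)) := by
  set r := component (Perm.sumCongr e₁ e₂) (Perm.sumCongr f₁ f₂)
  have hl : component e₁ f₁ ≤ r.comap Sum.inl := component_le_iff.2
    ⟨fun z => component_edge _ (Perm.sumCongr f₁ f₂) (Sum.inl z),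
      fun z => component_face (Perm.sumCongr e₁ e₂) _ (Sum.inl z)⟩
  have hr : component e₂ f₂ ≤ r.comap Sum.inr := component_le_iff.2
    ⟨fun z => component_edge _ (Perm.sumCongr f₁ f₂) (Sum.inr z),
      fun z => component_face (Perm.sumCongr e₁ e₂) _ (Sum.inr z)⟩
  rw [← Nat.card_sum]
  refine Nat.card_le_card_of_surjective
    (Sum.elim (Quotient.map' Sum.inl hl) (Quotient.map' Sum.inr hr)) fun q => ?_
  induction q using Quotient.inductionOn with
  | h z =>
    rcases z with z | z
    · exact ⟨Sum.inl (Quotient.mk _ z), rfl⟩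
    · exact ⟨Sum.inr (Quotient.mk _ z), rfl⟩

theorem Planar.sumCongr {e₁ f₁ : Perm D₁} {e₂ f₂ : Perm D₂} (h₁ : Planar e₁ f₁)
    (h₂ : Planar e₂ f₂) : Planar (Perm.sumCongr e₁ e₂) (Perm.sumCongr f₁ f₂) := by
  rw [Planar] at *
  have hcomponent := card_quotient_component_sumCongr_le e₁ f₁ e₂ f₂
  have hedge := cycleCount_add_le_sumCongr e₁ e₂
  have hface := cycleCount_add_le_sumCongr f₁ f₂
  have hvertex := cycleCount_add_le_sumCongr (e₁ * f₁) (e₂ * f₂)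
  rw [← Perm.sumCongr_mul] at hvertex
  rw [Nat.card_sum]
  omega

end DisjointSums

section SmallMaps

theorem planar_boolNot : Planar boolNot boolNot := by
  have hcomponent : Nat.card (Quotient (component boolNot boolNot)) ≤ 1 := by
    refine card_quotient_component_le_one (o := true) fun x => ?_
    cases x
    · exact component_edge boolNot boolNot true
    · exact (component _ _).refl _
  have hedge : Nat.card Unit ≤ cycleCount boolNot :=
    card_le_cycleCount (g := fun _ => ()) (fun _ => ⟨true, rfl⟩) fun _ => rfl
  have hvertex : Nat.card Bool ≤ cycleCount (boolNot * boolNot) :=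
    card_le_cycleCount (g := id) Function.surjective_id Bool.not_not
  have hbool : Nat.card Bool = 2 := by simp
  rw [Nat.card_unique] at hedge
  rw [Planar]
  omega

variable {D : Type*} [Finite D] {σ : Perm D} {l : List D}

/-- The sphere cut along an equator `l` into two faces, whose darts are the left and the right
summand. -/
theorem planar_sumComm (hl : IsCycleList σ l) (hne : l ≠ []) (hmem : ∀ x, x ∈ l) :
    Planar (Equiv.sumComm D D) (Perm.sumCongr σ σ⁻¹) := by
  have : Nonempty D := ⟨l.head hne⟩
  set e : Perm (D ⊕ D) := Equiv.sumComm D D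
  set f : Perm (D ⊕ D) := Perm.sumCongr σ σ⁻¹
  have hcomponent : Nat.card (Quotient (component e f)) ≤ 1 := by
    have hleft (x y : D) : component e f (Sum.inl x) (Sum.inl y) := by
      have hle : Perm.SameCycle.setoid σ ≤ (component e f).comap Sum.inl :=
        setoid_le_iff.2 fun z => component_face e f (Sum.inl z)
      exact hle (hl.sameCycle (hmem x) (hmem y))
    refine card_quotient_component_le_one (o := Sum.inl (l.head hne)) ?_
    rintro (x | x)
    · exact hleft _ x
    · exact (component e f).trans (hleft _ x) (component_edge e f (Sum.inl x))
  have hedge : Nat.card D ≤ cycleCount e :=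
    card_le_cycleCount (g := Sum.elim id id) (fun x => ⟨Sum.inl x, rfl⟩) (by rintro (x | x) <;> rfl)
  have hface : Nat.card Bool ≤ cycleCount f := by
    refine card_le_cycleCount (g := Sum.isLeft) (fun b => ?_) (by rintro (x | x) <;> rfl)
    cases b
    · exact ⟨Sum.inr (l.head hne), rfl⟩
    · exact ⟨Sum.inl (l.head hne), rfl⟩
  have hvertex : Nat.card D ≤ cycleCount (e * f) := by
    refine card_le_cycleCount (g := Sum.elim id σ.symm) (fun x => ⟨Sum.inl x, rfl⟩) ?_
    rintro (x | x)
    · exact σ.symm_apply_apply x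
    · rfl
  rw [Nat.card_eq_fintype_card, Fintype.card_bool] at hface
  rw [Planar, Nat.card_sum]
  omega

theorem isCycleList_finRange (n : ℕ) : IsCycleList (finRotate n) (List.finRange n) := by
  refine ⟨List.nodup_finRange n, ?_⟩
  cases n with
  | zero => exact trivial
  | succ n =>
    have hrange : List.finRange (n + 1) = (List.range (n + 1)).map (Fin.ofNat (n + 1)) :=
      List.ext_getElem (by simp) fun i hi _ => by
        simp [Fin.ext_iff, Nat.mod_eq_of_lt (List.length_finRange ▸ hi)]
    rw [hrange, ← Cycle.map_coe, Cycle.chain_map, Cycle.chain_range_succ]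
    simp [Fin.ext_iff, Fin.val_add]

end SmallMaps

section SphericalMaps

/-- The inverse of a letter: the same symbol with the opposite exponent. -/
def letterInv {X : Type*} (p : X × Bool) : X × Bool := (p.1, !p.2)

theorem letterInv_letterInv {X : Type*} (p : X × Bool) : letterInv (letterInv p) = p := by
  simp [letterInv]

/-- A labelled planar map whose components are spheres. The elements of `D` are the oriented
edges (darts): `edge` reverses a dart, `face` passes to the next dart around the face on a fixed
side, and `label` reads a letter along each dart. A dart fixed by `edge` is discarded, so that
darts can be removed from a map without changing the type `D`. -/
structure SphericalMap (D X : Type*) where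
  edge : Perm D
  face : Perm D
  label : D → X × Bool
  edge_edge : ∀ d, edge (edge d) = d
  face_of_edge : ∀ d, edge d = d → face d = d
  label_edge : ∀ d, edge d ≠ d → label (edge d) = letterInv (label d)
  planar : Planar edge face

namespace SphericalMap

variable {D X : Type*} {M M' : SphericalMap D X} {a b d : D} {l l₁ l₂ t : List D}

/-- The dart `d` has not been discarded. -/
def Active (M : SphericalMap D X) (d : D) : Prop := M.edge d ≠ d

/-- The list `l` is the boundary of a face; the empty list is allowed. -/
def IsFace (M : SphericalMap D X) (l : List D) : Prop :=
  IsCycleList M.face l ∧ ∀ d ∈ l, M.Active d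

/-- The word read along a list of darts. -/
def word (M : SphericalMap D X) (l : List D) : List (X × Bool) := l.map M.label

theorem edge_eq_iff : M.edge a = b ↔ a = M.edge b :=
  ⟨fun h => by rw [← h, M.edge_edge], fun h => by rw [h, M.edge_edge]⟩

theorem face_of_not_active (h : ¬ M.Active d) : M.face d = d := M.face_of_edge d (not_not.1 h)

theorem Active.edge (h : M.Active d) : M.Active (M.edge d) := fun h' => h (M.edge.injective h')

theorem Active.face (h : M.Active d) : M.Active (M.face d) := fun h' =>
  h ((M.face.injective (M.face_of_not_active (not_not.2 h'))).symm ▸ h')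

theorem IsFace.isRotated (h : M.IsFace l₁) (hrot : l₁ ~r l₂) : M.IsFace l₂ :=
  ⟨h.1.isRotated hrot, fun d hd => h.2 d (hrot.mem_iff.2 hd)⟩

theorem exists_isFace [Finite D] (h : M.Active d) : ∃ l, M.IsFace (d :: l) := by
  obtain ⟨l, hl⟩ := exists_isCycleList M.face d
  exact ⟨l, hl, hl.forall_mem (fun _ => M.face_of_not_active) List.mem_cons_self h⟩

/-- `M'` arises from `M` by discarding the darts `a` and `b`, without disturbing the faces that
contain neither of them. -/
structure Reduces (M M' : SphericalMap D X) (a b : D) : Prop where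
  label_eq : M'.label = M.label
  active_iff : ∀ x, M'.Active x ↔ M.Active x ∧ x ≠ a ∧ x ≠ b
  isFace : ∀ {l}, M.IsFace l → a ∉ l → b ∉ l → M'.IsFace l

theorem skip_skip_mul_swap [DecidableEq D] {x : D} (ha : M.Active a) (hb : M.Active b)
    (hxa : x ≠ a) (hxb : x ≠ b) :
    skip b (skip a (M.edge * swap a b)) x =
      if x = M.edge a then M.edge b else if x = M.edge b then M.edge a else M.edge x := by
  have hea : M.edge a ≠ a := ha
  have heb : M.edge b ≠ b := hb
  have hee := M.edge_edge
  have hx : (M.edge * swap a b) x = M.edge x := by simp [swap_apply_of_ne_of_ne hxa hxb]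
  have ha' : (M.edge * swap a b) a = M.edge b := by simp
  have hb' : (M.edge * swap a b) b = M.edge a := by simp
  split_ifs with h h
  · subst h
    rw [skip_of_ne hxb] <;> rw [skip_of_apply_eq (by rw [hx, hee]), ha']
    exact heb
  · subst h
    rw [skip_of_apply_eq, skip_of_ne] <;> grind [skip_of_ne]
  · rw [skip_of_ne hxb] <;> rw [skip_of_ne hxa] <;> grind

theorem exists_reduces [DecidableEq D] {e' g : Perm D}
    (hplanar : Planar e' (skip b (skip a g))) (hea : e' a = a) (heb : e' b = b)
    (hinv : ∀ x, x ≠ a → x ≠ b → e' (e' x) = x)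
    (hfixed : ∀ x, x ≠ a → x ≠ b → (e' x = x ↔ M.edge x = x))
    (hlabel : ∀ x, x ≠ a → x ≠ b → M.edge x ≠ x → M.label (e' x) = letterInv (M.label x))
    (hg : ∀ x, x ≠ a → x ≠ b → M.face x ≠ a → M.face x ≠ b → g x = M.face x) :
    ∃ M', M.Reduces M' a b ∧ M'.face = skip b (skip a g) := by
  have hface (x : D) (hx : e' x = x) : skip b (skip a g) x = x := by
    rcases eq_or_ne x a with rfl | hxa
    · exact skip_of_fixed skip_self
    rcases eq_or_ne x b with rfl | hxb
    · exact skip_self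
    have hMx := M.face_of_edge x ((hfixed x hxa hxb).1 hx)
    exact skip_of_fixed
      (skip_of_fixed ((hg x hxa hxb (by rwa [hMx]) (by rwa [hMx])).trans hMx))
  have hactive (x : D) : e' x ≠ x ↔ M.edge x ≠ x ∧ x ≠ a ∧ x ≠ b := by
    by_cases hxa : x = a <;> by_cases hxb : x = b <;> simp_all
  refine ⟨⟨e', skip b (skip a g), M.label, fun x => ?_, hface, fun x hx => ?_, hplanar⟩,
    ⟨rfl, hactive, fun {l} hl hal hbl => ⟨?_, fun x hx => ?_⟩⟩, rfl⟩
  · by_cases hxa : x = a <;> by_cases hxb : x = b <;> simp_all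
  · exact hlabel x ((hactive x).1 hx).2.1 ((hactive x).1 hx).2.2 ((hactive x).1 hx).1
  · refine ((hl.1.congr fun x hx => ?_).skip_of_notMem hal).skip_of_notMem hbl
    have hx' := hl.1.apply_mem hx
    exact hg x (ne_of_mem_of_not_mem hx hal) (ne_of_mem_of_not_mem hx hbl)
      (ne_of_mem_of_not_mem hx' hal) (ne_of_mem_of_not_mem hx' hbl)
  · exact (hactive x).2 ⟨hl.2 x hx, ne_of_mem_of_not_mem hx hal, ne_of_mem_of_not_mem hx hbl⟩

variable [Finite D]

theorem exists_fold (h : M.IsFace (a :: b :: t)) (hlabel : M.label b = letterInv (M.label a)) :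
    ∃ M', M.Reduces M' a b ∧ M'.IsFace t := by
  classical
  have ha : M.edge a ≠ a := h.2 a (by simp)
  have hb : M.edge b ≠ b := h.2 b (by simp)
  obtain ⟨hat, hbt, -⟩ : a ∉ b :: t ∧ b ∉ t ∧ t.Nodup := by simpa only [List.nodup_cons] using h.1.1
  have hee := M.edge_edge
  have hplanar : Planar (skip b (skip a (M.edge * swap a b))) (skip b (skip a M.face)) := by
    have hface : M.face.SameCycle a b := h.1.sameCycle (by simp) (by simp)
    have hskip : skip a M.face = swap a b * M.face := by rw [skip, h.1.apply_eq]
    rw [hskip]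
    exact (((M.planar.mul_swap_of_sameCycle_face hface).skip_face b).skip_edge a).skip_edge b
  have he {x : D} (hxa : x ≠ a) (hxb : x ≠ b) : skip b (skip a (M.edge * swap a b)) x = _ :=
    skip_skip_mul_swap ha hb hxa hxb
  have hinv (x : D) (hxa : x ≠ a) (hxb : x ≠ b) :
      skip b (skip a (M.edge * swap a b)) (skip b (skip a (M.edge * swap a b)) x) = x := by
    rw [he hxa hxb]
    split_ifs with hxea hxeb
    · rw [he] <;> grind
    · rw [he] <;> grind
    · rw [he] <;> grind
  have hlabel' (x : D) (hxa : x ≠ a) (hxb : x ≠ b) (hx : M.edge x ≠ x) :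
      M.label (skip b (skip a (M.edge * swap a b)) x) = letterInv (M.label x) := by
    rw [he hxa hxb]
    split_ifs with hxea hxeb
    · rw [hxea, M.label_edge a ha, M.label_edge b hb, hlabel]
    · rw [hxeb, M.label_edge a ha, M.label_edge b hb, hlabel, letterInv_letterInv]
    · exact M.label_edge x hx
  obtain ⟨M', hM', hface'⟩ := exists_reduces hplanar (skip_of_fixed skip_self) skip_self hinv
    (fun x hxa hxb => by rw [he hxa hxb]; split_ifs <;> grind) hlabel' fun _ _ _ _ _ => rfl
  refine ⟨M', hM', hface' ▸ h.1.skip_head.skip_head, fun x hx => ?_⟩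
  exact (hM'.active_iff x).2 ⟨h.2 x (by simp [hx]), by grind, by grind⟩

theorem exists_merge (h₁ : M.IsFace (d :: l₁)) (h₂ : M.IsFace (M.edge d :: l₂))
    (hd : M.edge d ∉ d :: l₁) : ∃ M', M.Reduces M' d (M.edge d) ∧ M'.IsFace (l₂ ++ l₁) := by
  classical
  have hdisjoint : (d :: l₁).Disjoint (M.edge d :: l₂) := fun x hx hx' =>
    hd ((h₁.1.mem_iff_of_sameCycle (h₂.1.sameCycle hx' List.mem_cons_self)).1 hx)
  have hee := M.edge_edge
  have hd' : M.edge d ≠ d := h₁.2 d List.mem_cons_self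
  have he (x : D) (hxa : x ≠ d) (hxb : x ≠ M.edge d) :
      (M.edge * swap d (M.edge d)) x = M.edge x := by simp [swap_apply_of_ne_of_ne hxa hxb]
  have hplanar := ((M.planar.mul_swap_of_sameCycle_edge (x := d) (y := M.edge d)
    (Perm.sameCycle_apply_right.2 (Perm.SameCycle.refl _ _))).skip_face d).skip_face (M.edge d)
  obtain ⟨M', hM', hface'⟩ := exists_reduces hplanar (by simp [hee]) (by simp)
    (fun x hxa hxb => by rw [he x hxa hxb, he] <;> grind) (fun x hxa hxb => by rw [he x hxa hxb])
    (fun x hxa hxb hx => by rw [he x hxa hxb, M.label_edge x hx])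
    fun x _ _ hfa hfb => by simp [swap_apply_of_ne_of_ne hfa hfb]
  have hjoin := h₁.1.join h₂.1 hdisjoint
  refine ⟨M', hM', hface' ▸ (hjoin.skip_head.append_comm).skip_head, fun x hx => ?_⟩
  obtain ⟨hdt, hnodup⟩ := List.nodup_cons.1 hjoin.1
  obtain ⟨het, -⟩ := List.nodup_cons.1 (List.nodup_append_comm.1 hnodup)
  have hx' : x ∈ l₁ ∨ x ∈ l₂ := (List.mem_append.1 hx).symm
  refine (hM'.active_iff x).2 ⟨?_, ?_, ?_⟩
  · exact hx'.elim (fun hx => h₁.2 x (by simp [hx])) fun hx => h₂.2 x (by simp [hx])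
  · rintro rfl
    exact hdt (List.mem_append.2 (hx'.imp id (List.mem_cons_of_mem _)))
  · rintro rfl
    exact het hx

end SphericalMap

end SphericalMaps

section Diagrams

namespace SphericalMap

variable {D D₁ D₂ X : Type*} {M : SphericalMap D X} {M₁ : SphericalMap D₁ X}
  {M₂ : SphericalMap D₂ X} {F : Set (List (X × Bool))} {o : List D}

/-- The map consisting of a single edge of the sphere, one side of which reads the letter `p`. -/
def pair (p : X × Bool) : SphericalMap Bool X where
  edge := boolNot
  face := boolNot
  label b := bif b then p else letterInv p
  edge_edge := Bool.not_not
  face_of_edge _ h := h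
  label_edge b _ := by cases b <;> simp [letterInv_letterInv]
  planar := planar_boolNot

theorem isFace_pair (p : X × Bool) : (pair p).IsFace [true, false] :=
  ⟨⟨by simp, by simp [pair]⟩, fun b _ => by cases b <;> simp [Active, pair]⟩

/-- The map consisting of a circle on the sphere, one side of which reads the word `w`. -/
def bubble (w : List (X × Bool)) (hw : w ≠ []) :
    SphericalMap (Fin w.length ⊕ Fin w.length) X where
  edge := Equiv.sumComm _ _
  face := Perm.sumCongr (finRotate _) (finRotate _)⁻¹
  label := Sum.elim w.get fun i => letterInv (w.get i)
  edge_edge d := by cases d <;> rfl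
  face_of_edge d h := by cases d <;> simp at h
  label_edge d _ := by cases d <;> simp [letterInv_letterInv]
  planar := planar_sumComm (isCycleList_finRange _) (by simpa using hw) List.mem_finRange

theorem bubble_isFace_inl (w : List (X × Bool)) (hw : w ≠ []) :
    (bubble w hw).IsFace ((List.finRange _).map Sum.inl) := by
  refine ⟨(isCycleList_finRange _).map Sum.inl_injective fun _ => rfl, fun d _ => ?_⟩
  cases d <;> simp [Active, bubble]

theorem bubble_isFace_inr (w : List (X × Bool)) (hw : w ≠ []) :
    (bubble w hw).IsFace ((List.finRange _).reverse.map Sum.inr) := by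
  refine ⟨(isCycleList_finRange _).inv.map Sum.inr_injective fun _ => rfl, fun d _ => ?_⟩
  cases d <;> simp [Active, bubble]

/-- The connected sum of two maps, formed by joining the face of `M₁` at the dart `a` to the face
of `M₂` at the dart `b`. -/
def join [Finite D₁] [Finite D₂] [DecidableEq D₁] [DecidableEq D₂] (M₁ : SphericalMap D₁ X)
    (M₂ : SphericalMap D₂ X) (a : D₁) (b : D₂) (ha : M₁.Active a) (hb : M₂.Active b) :
    SphericalMap (D₁ ⊕ D₂) X where
  edge := Perm.sumCongr M₁.edge M₂.edge
  face := swap (Sum.inl a) (Sum.inr b) * Perm.sumCongr M₁.face M₂.face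
  label := Sum.elim M₁.label M₂.label
  edge_edge d := by cases d <;> simp [M₁.edge_edge, M₂.edge_edge]
  face_of_edge d h := by
    cases d with
    | inl x =>
      have hx : M₁.edge x = x := by simpa using h
      have hxa : x ≠ a := fun h => ha (h ▸ hx)
      simp [M₁.face_of_edge x hx, swap_apply_of_ne_of_ne, hxa]
    | inr x =>
      have hx : M₂.edge x = x := by simpa using h
      have hxb : x ≠ b := fun h => hb (h ▸ hx)
      simp [M₂.face_of_edge x hx, swap_apply_of_ne_of_ne, hxb]
  label_edge d h := by
    cases d with
    | inl x => exact M₁.label_edge x (by simpa using h)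
    | inr x => exact M₂.label_edge x (by simpa using h)
  planar := (M₁.planar.sumCongr M₂.planar).swap_mul_of_not_component
    (not_component_sumCongr _ _ _ _ _ _)

/-- The map `M` is a diagram over `F` with outer boundary `o`: every face other than `o` reads a
word of `F`. The outer boundary is empty when it has been collapsed to a point, in which case every
face reads a word of `F`. -/
structure IsDiagram (M : SphericalMap D X) (F : Set (List (X × Bool))) (o : List D) : Prop where
  outer : M.IsFace o
  inner : ∀ d, M.Active d → d ∉ o → ∃ l, M.IsFace l ∧ d ∈ l ∧ M.word l ∈ F

theorem IsFace.subset {s t : List D} {x : D} (hs : M.IsFace s) (ht : M.IsFace t) (hxs : x ∈ s)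
    (hxt : x ∈ t) : s ⊆ t :=
  (hs.1.isRotated_of_mem ht.1 hxs hxt).perm.subset

theorem IsDiagram.mono {F' : Set (List (X × Bool))} (h : M.IsDiagram F o) (hF : F ⊆ F') :
    M.IsDiagram F' o :=
  ⟨h.outer, fun d hd hdo => (h.inner d hd hdo).imp fun _ hl => ⟨hl.1, hl.2.1, hF hl.2.2⟩⟩

theorem IsDiagram.isRotated {o' : List D} (h : M.IsDiagram F o) (hrot : o ~r o') :
    M.IsDiagram F o' :=
  ⟨h.outer.isRotated hrot, fun d hd hdo => h.inner d hd fun h => hdo (hrot.mem_iff.1 h)⟩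

section Join

variable [Finite D₁] [Finite D₂] [DecidableEq D₁] [DecidableEq D₂] {a : D₁} {b : D₂}
  {ha : M₁.Active a} {hb : M₂.Active b}

theorem isFace_join {s : List D₁} {t : List D₂} (hs : M₁.IsFace (a :: s))
    (ht : M₂.IsFace (b :: t)) :
    (join M₁ M₂ a b ha hb).IsFace ((a :: s).map Sum.inl ++ (b :: t).map Sum.inr) := by
  refine ⟨?_, ?_⟩
  · have hs' : IsCycleList (Perm.sumCongr M₁.face M₂.face) ((a :: s).map Sum.inl) :=
      hs.1.map Sum.inl_injective fun _ => rfl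
    have ht' : IsCycleList (Perm.sumCongr M₁.face M₂.face) ((b :: t).map Sum.inr) :=
      ht.1.map Sum.inr_injective fun _ => rfl
    refine hs'.join ht' ?_
    rintro (_ | _) <;> simp
  · simp only [List.mem_append, List.mem_map]
    rintro _ (⟨x, hx, rfl⟩ | ⟨x, hx, rfl⟩)
    · exact fun h => hs.2 x hx (Sum.inl_injective h)
    · exact fun h => ht.2 x hx (Sum.inr_injective h)

theorem isFace_join_inl {l : List D₁} (hl : M₁.IsFace l) (hal : a ∉ l) :
    (join M₁ M₂ a b ha hb).IsFace (l.map Sum.inl) := by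
  refine ⟨?_, ?_⟩
  · refine (hl.1.map (τ := Perm.sumCongr M₁.face M₂.face) Sum.inl_injective fun _ => rfl).congr ?_
    simp only [List.mem_map]
    rintro _ ⟨x, hx, rfl⟩
    have hxa : M₁.face x ≠ a := ne_of_mem_of_not_mem (hl.1.apply_mem hx) hal
    exact swap_apply_of_ne_of_ne (Sum.inl_injective.ne hxa) Sum.inl_ne_inr
  · simp only [List.mem_map]
    rintro _ ⟨x, hx, rfl⟩ h
    exact hl.2 x hx (Sum.inl_injective h)

theorem isFace_join_inr {l : List D₂} (hl : M₂.IsFace l) (hbl : b ∉ l) :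
    (join M₁ M₂ a b ha hb).IsFace (l.map Sum.inr) := by
  refine ⟨?_, ?_⟩
  · refine (hl.1.map (τ := Perm.sumCongr M₁.face M₂.face) Sum.inr_injective fun _ => rfl).congr ?_
    simp only [List.mem_map]
    rintro _ ⟨x, hx, rfl⟩
    have hxb : M₂.face x ≠ b := ne_of_mem_of_not_mem (hl.1.apply_mem hx) hbl
    exact swap_apply_of_ne_of_ne (a := Sum.inl a) Sum.inr_ne_inl (Sum.inr_injective.ne hxb)
  · simp only [List.mem_map]
    rintro _ ⟨x, hx, rfl⟩ h
    exact hl.2 x hx (Sum.inr_injective h)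

theorem IsDiagram.join {s : List D₁} {t : List D₂} (h₁ : M₁.IsDiagram F (a :: s))
    (h₂ : M₂.IsDiagram F (b :: t)) :
    (join M₁ M₂ a b ha hb).IsDiagram F ((a :: s).map Sum.inl ++ (b :: t).map Sum.inr) := by
  refine ⟨isFace_join h₁.outer h₂.outer, ?_⟩
  rintro (x | x) hx hxo
  · have hxs : x ∉ a :: s := fun h => hxo (List.mem_append_left _ (List.mem_map_of_mem h))
    obtain ⟨l, hl, hxl, hlF⟩ := h₁.inner x (fun h => hx (congrArg Sum.inl h)) hxs
    refine ⟨l.map Sum.inl, isFace_join_inl hl fun hal => hxs ?_, List.mem_map_of_mem hxl, ?_⟩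
    · exact hl.subset h₁.outer hal List.mem_cons_self hxl
    · rwa [word, List.map_map]
  · have hxt : x ∉ b :: t := fun h => hxo (List.mem_append_right _ (List.mem_map_of_mem h))
    obtain ⟨l, hl, hxl, hlF⟩ := h₂.inner x (fun h => hx (congrArg Sum.inr h)) hxt
    refine ⟨l.map Sum.inr, isFace_join_inr hl fun hbl => hxt ?_, List.mem_map_of_mem hxl, ?_⟩
    · exact hl.subset h₂.outer hbl List.mem_cons_self hxl
    · rwa [word, List.map_map]

end Join

theorem IsDiagram.exists_fold_outer [Finite D] {a b : D} {t : List D}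
    (h : M.IsDiagram F (a :: b :: t)) (hlabel : M.label b = letterInv (M.label a)) :
    ∃ M', M.Reduces M' a b ∧ M'.IsDiagram F t := by
  obtain ⟨M', hM', ht⟩ := exists_fold h.outer hlabel
  refine ⟨M', hM', ht, fun x hx hxt => ?_⟩
  obtain ⟨hx, hxa, hxb⟩ := (hM'.active_iff x).1 hx
  have hxo : x ∉ a :: b :: t := by simp [hxa, hxb, hxt]
  obtain ⟨l, hl, hxl, hlF⟩ := h.inner x hx hxo
  refine ⟨l, hM'.isFace hl (fun hal => hxo ?_) (fun hbl => hxo ?_), hxl, ?_⟩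
  · exact hl.subset h.outer hal (by simp) hxl
  · exact hl.subset h.outer hbl (by simp) hxl
  · rwa [word, hM'.label_eq]

end SphericalMap

/-- The word `w` is read along the outer boundary of some finite diagram over `F`. -/
def BoundsDiagram {X : Type*} (F : Set (List (X × Bool))) (w : List (X × Bool)) : Prop :=
  ∃ (D : Type) (_ : Finite D) (M : SphericalMap D X) (o : List D), M.IsDiagram F o ∧ M.word o = w

namespace BoundsDiagram

open SphericalMap

variable {X : Type*} {F : Set (List (X × Bool))} {u v w : List (X × Bool)} {p : X × Bool}

theorem nil (F : Set (List (X × Bool))) : BoundsDiagram F [] := by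
  let M : SphericalMap Empty X := ⟨1, 1, nofun, nofun, nofun, nofun, by simp [Planar]⟩
  exact ⟨Empty, inferInstance, M, [], ⟨⟨isCycleList_nil, by simp⟩, nofun⟩, rfl⟩

theorem isRotated (h : BoundsDiagram F u) (huv : u ~r v) : BoundsDiagram F v := by
  obtain ⟨D, hD, M, o, ho, rfl⟩ := h
  obtain ⟨n, rfl⟩ := huv
  exact ⟨D, hD, M, o.rotate n, ho.isRotated ⟨n, rfl⟩, List.map_rotate ..⟩

theorem append (hu : BoundsDiagram F u) (hv : BoundsDiagram F v) : BoundsDiagram F (u ++ v) := by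
  classical
  obtain ⟨D₁, _, M₁, o₁, h₁, rfl⟩ := id hu
  obtain ⟨D₂, _, M₂, o₂, h₂, rfl⟩ := id hv
  rcases o₁ with _ | ⟨a, s⟩
  · exact hv
  rcases o₂ with _ | ⟨b, t⟩
  · simpa [word] using hu
  · refine ⟨D₁ ⊕ D₂, inferInstance, _, _, h₁.join h₂ (ha := h₁.outer.2 a List.mem_cons_self)
      (hb := h₂.outer.2 b List.mem_cons_self), ?_⟩
    simp [word, SphericalMap.join]

theorem pair (F : Set (List (X × Bool))) (p : X × Bool) : BoundsDiagram F [p, letterInv p] :=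
  ⟨Bool, inferInstance, SphericalMap.pair p, _, ⟨isFace_pair p, fun b => by cases b <;> simp⟩, rfl⟩

theorem cons_cons_letterInv_iff : BoundsDiagram F (p :: letterInv p :: w) ↔ BoundsDiagram F w := by
  refine ⟨?_, (pair F p).append⟩
  rintro ⟨D, hD, M, o, ho, how⟩
  obtain ⟨a, b, t, rfl, rfl, hb, rfl⟩ :
      ∃ a b t, o = a :: b :: t ∧ M.label a = p ∧ M.label b = letterInv p ∧ M.word t = w := by
    simpa [word, List.map_eq_cons_iff] using how
  obtain ⟨M', hM', ht⟩ := ho.exists_fold_outer hb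
  exact ⟨D, hD, M', t, ht, by rw [word, hM'.label_eq, word]⟩

theorem iff_of_step (h : FreeGroup.Red.Step u v) : BoundsDiagram F u ↔ BoundsDiagram F v := by
  obtain @⟨s, t, x, b⟩ := h
  have hrot : s ++ (x, b) :: (x, !b) :: t ~r (x, b) :: letterInv (x, b) :: (t ++ s) :=
    List.isRotated_append
  have hdelete : BoundsDiagram F ((x, b) :: letterInv (x, b) :: (t ++ s)) ↔ _ :=
    cons_cons_letterInv_iff
  exact ⟨fun h => (hdelete.1 (h.isRotated hrot)).isRotated List.isRotated_append,
    fun h => (hdelete.2 (h.isRotated List.isRotated_append)).isRotated hrot.symm⟩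

theorem iff_of_mk_eq (h : FreeGroup.mk u = FreeGroup.mk v) :
    BoundsDiagram F u ↔ BoundsDiagram F v :=
  iff_of_eq (congrArg (Quot.lift (BoundsDiagram F) fun _ _ h => propext (iff_of_step h)) h)

theorem of_isConj (h : BoundsDiagram F u) (huv : IsConj (FreeGroup.mk u) (FreeGroup.mk v)) :
    BoundsDiagram F v := by
  obtain ⟨c, hc⟩ := isConj_iff.1 huv
  obtain ⟨s, rfl⟩ := c.exists_rep
  have hrot : FreeGroup.invRev s ++ (s ++ u) ~r s ++ u ++ FreeGroup.invRev s :=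
    List.isRotated_append
  have hmk : FreeGroup.mk u = FreeGroup.mk (FreeGroup.invRev s ++ (s ++ u)) := by
    simp [← FreeGroup.mul_mk, ← FreeGroup.inv_mk]
  refine (iff_of_mk_eq ?_).1 (((iff_of_mk_eq hmk).1 h).isRotated hrot)
  rw [← hc, ← FreeGroup.mul_mk, ← FreeGroup.mul_mk, ← FreeGroup.inv_mk]
  rfl

theorem of_invRev_mem (hw : w ≠ []) (h : FreeGroup.invRev w ∈ F) : BoundsDiagram F w := by
  refine ⟨_, inferInstance, bubble w hw, _, ⟨bubble_isFace_inl w hw, ?_⟩, ?_⟩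
  · rintro (i | i) _ hi
    · simp at hi
    · refine ⟨_, bubble_isFace_inr w hw, by simp, ?_⟩
      have hword : (List.finRange w.length).map (letterInv ∘ w.get) = w.map letterInv := by
        rw [← List.map_map, List.map_get_finRange]
      rw [word, List.map_map, List.map_reverse]
      exact hword ▸ h
  · simp [word, bubble]

theorem of_mem_normalClosure (hne : ∀ r ∈ F, r ≠ []) (hinv : ∀ r ∈ F, FreeGroup.invRev r ∈ F)
    (h : FreeGroup.mk w ∈ Subgroup.normalClosure (FreeGroup.mk '' F)) : BoundsDiagram F w := by
  suffices ∀ g ∈ Subgroup.normalClosure (FreeGroup.mk '' F),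
      ∃ w, FreeGroup.mk w = g ∧ BoundsDiagram F w by
    obtain ⟨v, hv, hbounds⟩ := this _ h
    exact (iff_of_mk_eq hv).1 hbounds
  intro g hg
  induction hg using Subgroup.closure_induction'' with
  | one => exact ⟨[], rfl, nil F⟩
  | mem g hg =>
    obtain ⟨_, ⟨r, hr, rfl⟩, hconj⟩ := Group.mem_conjugatesOfSet_iff.1 hg
    obtain ⟨v, rfl⟩ := g.exists_rep
    exact ⟨v, rfl, of_isConj (of_invRev_mem (hne r hr) (hinv r hr)) hconj⟩
  | inv_mem g hg =>
    obtain ⟨_, ⟨r, hr, rfl⟩, hconj⟩ := Group.mem_conjugatesOfSet_iff.1 hg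
    obtain ⟨v, rfl⟩ := g.exists_rep
    refine ⟨FreeGroup.invRev v, rfl, of_isConj (of_invRev_mem (w := FreeGroup.invRev r) ?_ ?_) ?_⟩
    · exact hne _ (hinv r hr)
    · rwa [FreeGroup.invRev_invRev]
    · obtain ⟨c, hc⟩ := isConj_iff.1 hconj
      exact isConj_iff.2 ⟨c, by rw [← FreeGroup.inv_mk, ← conj_inv, hc]; rfl⟩
  | mul g g' _ _ hg hg' =>
    obtain ⟨u, rfl, hu⟩ := hg
    obtain ⟨v, rfl, hv⟩ := hg'
    exact ⟨u ++ v, rfl, hu.append hv⟩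

end BoundsDiagram

end Diagrams

section MinimalCounterexamples

theorem mk_cons_cons_letterInv {X : Type*} (p : X × Bool) (w : List (X × Bool)) :
    FreeGroup.mk (p :: letterInv p :: w) = FreeGroup.mk w :=
  Quot.sound FreeGroup.Red.Step.cons_not

theorem eq_nil_of_isReduced_of_mk_eq_one {X : Type*} {w : List (X × Bool)}
    (hw : FreeGroup.IsReduced w) (h : FreeGroup.mk w = 1) : w = [] := by
  classical
  exact hw.reduce_eq.symm.trans (FreeGroup.reduce.sound h)

theorem eq_nil_of_isReduced_of_eq_invRev {X : Type*} {w : List (X × Bool)}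
    (hw : FreeGroup.IsReduced w) (h : w = FreeGroup.invRev w) : w = [] := by
  have hmk : FreeGroup.mk w ^ 2 = 1 := by
    nth_rw 1 [pow_two, h]
    rw [← FreeGroup.inv_mk, inv_mul_cancel]
  exact eq_nil_of_isReduced_of_mk_eq_one hw ((pow_eq_one_iff_left two_ne_zero).1 hmk)

/-- The words allowed on the inner faces of a diagram over `R` whose faces may be merged: the
relators and all words that are trivial in the free group. -/
def relatorsOrTrivial {X : Type*} (R : Set (List (X × Bool))) : Set (List (X × Bool)) :=
  R ∪ {w | FreeGroup.mk w = 1}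

namespace SphericalMap

variable {D X : Type*} {M M' : SphericalMap D X} {F R : Set (List (X × Bool))} {A : Set X}
  {a b d : D} {l l₀ l₁ l₂ o o' : List D}

theorem Reduces.isDiagram (h : M.Reduces M' a b) (hM : M.IsDiagram F o) (ha : a ∉ o) (hb : b ∉ o)
    (hl₀ : M'.IsFace l₀) (hword : M.word l₀ ∈ F)
    (hcover : ∀ l, M.IsFace l → a ∈ l ∨ b ∈ l → l ⊆ a :: b :: l₀) : M'.IsDiagram F o where
  outer := h.isFace hM.outer ha hb
  inner x hx hxo := by
    obtain ⟨hx, hxa, hxb⟩ := (h.active_iff x).1 hx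
    obtain ⟨l, hl, hxl, hlF⟩ := hM.inner x hx hxo
    by_cases hab : a ∈ l ∨ b ∈ l
    · have hxl₀ : x ∈ l₀ := by simpa [hxa, hxb] using hcover l hl hab hxl
      exact ⟨l₀, hl₀, hxl₀, by rwa [word, h.label_eq]⟩
    · obtain ⟨hal, hbl⟩ := not_or.1 hab
      exact ⟨l, h.isFace hl hal hbl, hxl, by rwa [word, h.label_eq]⟩

/-- A diagram showing that some nontrivial element of the free group on `A` is trivial modulo the
relators `R`. -/
structure IsCounterexample (M : SphericalMap D X) (R : Set (List (X × Bool))) (A : Set X)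
    (o : List D) : Prop where
  diagram : M.IsDiagram (relatorsOrTrivial R) o
  letters : ∀ d ∈ o, (M.label d).1 ∈ A
  nontrivial : FreeGroup.mk (M.word o) ≠ 1

/-- A counterexample that does not remain one when two of its darts are discarded. -/
structure IsMinimalCounterexample (M : SphericalMap D X) (R : Set (List (X × Bool))) (A : Set X)
    (o : List D) : Prop extends M.IsCounterexample R A o where
  minimal : ∀ {M' a b o'}, M.Active a → M.Reduces M' a b → ¬ M'.IsCounterexample R A o'

theorem IsCounterexample.exists_minimal [Finite D] (h : M.IsCounterexample R A o) :
    ∃ (M' : SphericalMap D X) (o' : List D), M'.IsMinimalCounterexample R A o' := by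
  induction hn : {d | M.Active d}.ncard using Nat.strong_induction_on generalizing M o with
  | _ n ih =>
    by_contra! hnot
    refine hnot M o ⟨h, fun {M' a b o'} ha hM' h' => ?_⟩
    have hlt : {d | M'.Active d}.ncard < n := by
      refine hn ▸ Set.ncard_lt_ncard ⟨fun x hx => ((hM'.active_iff x).1 hx).1, fun hsub => ?_⟩
      exact ((hM'.active_iff a).1 (hsub ha)).2.1 rfl
    obtain ⟨M'', o'', h''⟩ := ih _ hlt h' rfl
    exact hnot M'' o'' h''

theorem mk_word_eq_one_of_isRotated (hrot : l₁ ~r l₂) (h : FreeGroup.mk (M.word l₁) = 1) :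
    FreeGroup.mk (M.word l₂) = 1 := by
  obtain ⟨s, t, rfl, rfl⟩ : ∃ s t, l₁ = s ++ t ∧ l₂ = t ++ s := by
    obtain ⟨n, hn, rfl⟩ := List.isRotated_iff_mod.1 hrot
    exact ⟨l₁.take n, l₁.drop n, by simp, List.rotate_eq_drop_append_take hn⟩
  rw [word, List.map_append, ← FreeGroup.mul_mk] at h ⊢
  exact mul_eq_one_comm.1 h

theorem IsCounterexample.isRotated (h : M.IsCounterexample R A o) (hrot : o ~r o') :
    M.IsCounterexample R A o' where
  diagram := h.diagram.isRotated hrot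
  letters d hd := h.letters d (hrot.mem_iff.2 hd)
  nontrivial h' := h.nontrivial (mk_word_eq_one_of_isRotated hrot.symm h')

theorem IsCounterexample.word_mem_relatorsOrTrivial (h : M.IsCounterexample R A o)
    (hR : Symmetrized R) (hl : M.IsFace l) (hdl : d ∈ l) (hdo : d ∉ o) :
    M.word l ∈ relatorsOrTrivial R := by
  obtain ⟨l', hl', hdl', hword⟩ := h.diagram.inner d (hl.2 d hdl) hdo
  have hrot : l' ~r l := hl'.1.isRotated_of_mem hl.1 hdl' hdl
  exact hword.imp (fun h => hR.1 _ h _ (hrot.map _)) (mk_word_eq_one_of_isRotated hrot)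

namespace IsMinimalCounterexample

variable [Finite D]

theorem label_face_ne (h : M.IsMinimalCounterexample R A o) (hR : Symmetrized R)
    (hred : ∀ w ∈ R, FreeGroup.IsReduced w) (hd : M.Active d) :
    M.label (M.face d) ≠ letterInv (M.label d) := by
  obtain ⟨_ | ⟨b, t⟩, hl⟩ := M.exists_isFace hd
  · simp [isCycleList_singleton.1 hl.1, letterInv, Prod.ext_iff]
  rw [hl.1.apply_eq]
  intro hlabel
  have hmk : FreeGroup.mk (M.word (d :: b :: t)) = FreeGroup.mk (M.word t) := by
    simp [word, hlabel, mk_cons_cons_letterInv]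
  by_cases hdo : d ∈ o
  · have h' := h.isRotated (h.diagram.outer.1.isRotated_of_mem hl.1 hdo List.mem_cons_self)
    obtain ⟨M', hM', ht⟩ := h'.diagram.exists_fold_outer hlabel
    refine h.minimal hd hM' ⟨ht, fun x hx => ?_, ?_⟩
    · rw [hM'.label_eq]
      exact h'.letters x (by simp [hx])
    · rw [word, hM'.label_eq, ← word, ← hmk]
      exact h'.nontrivial
  · obtain hR' | htrivial := h.word_mem_relatorsOrTrivial hR hl List.mem_cons_self hdo
    · have hreduced := hred _ hR'
      simp [word, hlabel, letterInv] at hreduced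
    · obtain ⟨M', hM', ht⟩ := exists_fold hl hlabel
      have hbo : b ∉ o := fun hb => hdo (hl.subset h.diagram.outer (by simp) hb (by simp))
      refine h.minimal hd hM' ⟨hM'.isDiagram h.diagram hdo hbo ht (Or.inr ?_) ?_, ?_, ?_⟩
      · exact hmk.symm.trans htrivial
      · rintro s hs (hds | hbs)
        · exact hs.subset hl hds (by simp)
        · exact hs.subset hl hbs (by simp)
      · exact hM'.label_eq ▸ h.letters
      · rw [word, hM'.label_eq]
        exact h.nontrivial

theorem isReduced_word (h : M.IsMinimalCounterexample R A o) (hR : Symmetrized R)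
    (hred : ∀ w ∈ R, FreeGroup.IsReduced w) (hl : M.IsFace l) :
    FreeGroup.IsReduced (M.word l) := by
  refine (List.isChain_map _).2 (hl.1.isChain.imp_of_mem_imp ?_)
  rintro x _ hx - rfl heq
  by_contra hne
  refine h.label_face_ne hR hred (hl.2 x hx) (Prod.ext heq.symm ?_)
  simpa only [letterInv, Bool.eq_not, ne_comm] using hne

theorem word_mem (h : M.IsMinimalCounterexample R A o) (hR : Symmetrized R)
    (hred : ∀ w ∈ R, FreeGroup.IsReduced w) (hl : M.IsFace l) (hdl : d ∈ l) (hdo : d ∉ o) :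
    M.word l ∈ R := by
  refine (h.word_mem_relatorsOrTrivial hR hl hdl hdo).resolve_right fun htrivial => ?_
  have hnil := eq_nil_of_isReduced_of_mk_eq_one (h.isReduced_word hR hred hl) htrivial
  simp_all [word]

theorem word_ne_invRev (h : M.IsMinimalCounterexample R A o) (hR : Symmetrized R)
    (hred : ∀ w ∈ R, FreeGroup.IsReduced w) (hdo : d ∉ o) (hedo : M.edge d ∉ o)
    (h₁ : M.IsFace (d :: l₁)) (h₂ : M.IsFace (M.edge d :: l₂)) :
    M.word l₁ ≠ FreeGroup.invRev (M.word l₂) := by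
  intro heq
  by_cases hmem : M.edge d ∈ l₁
  · obtain ⟨u, v, rfl⟩ := List.append_of_mem hmem
    obtain rfl : l₂ = v ++ d :: u :=
      h₂.1.eq (h₁.isRotated (List.isRotated_append (l := d :: u))).1
    have hsplit : M.word u ++ M.word (M.edge d :: v) =
        FreeGroup.invRev (M.word u) ++ FreeGroup.invRev (M.word (v ++ [d])) := by
      simpa [word, FreeGroup.invRev] using heq
    have hreduced := (h.isReduced_word hR hred h₁).infix (L₁ := M.word u)
      ⟨[M.label d], M.word (M.edge d :: v), by simp [word]⟩
    have hnil := eq_nil_of_isReduced_of_eq_invRev hreduced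
      (List.append_inj_left hsplit FreeGroup.invRev_length.symm)
    obtain rfl : u = [] := by simpa [word] using hnil
    have hd := h₁.2 d List.mem_cons_self
    refine h.label_face_ne hR hred hd ?_
    rw [h₁.1.apply_eq, M.label_edge d hd]
  · have hed : M.edge d ∉ d :: l₁ := by simp [hmem, show M.edge d ≠ d from h₁.2 d (by simp)]
    obtain ⟨M', hM', hface⟩ := exists_merge h₁ h₂ hed
    refine h.minimal (h₁.2 d List.mem_cons_self) hM'
      ⟨hM'.isDiagram h.diagram hdo hedo hface (Or.inr ?_) ?_, ?_, ?_⟩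
    · change FreeGroup.mk (M.word (l₂ ++ l₁)) = 1
      rw [word, List.map_append, ← word, ← word, heq, ← FreeGroup.mul_mk, ← FreeGroup.inv_mk,
        mul_inv_cancel]
    · rintro s hs (hds | hes)
      · exact List.Subset.trans (hs.subset h₁ hds List.mem_cons_self) (by grind)
      · exact List.Subset.trans (hs.subset h₂ hes List.mem_cons_self) (by grind)
    · exact hM'.label_eq ▸ h.letters
    · rw [word, hM'.label_eq]
      exact h.nontrivial

end IsMinimalCounterexample

end SphericalMap

end MinimalCounterexamples

section Blocks

variable {X : Type*} {R : Set (List (X × Bool))} {A : Set X} {L : List (List (X × Bool))}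
  {S u : List (X × Bool)}

/-- Removing a subword over `A` from a relator never leaves a product of three or fewer pieces. -/
def ComplementsNeedFourPieces (R : Set (List (X × Bool))) (A : Set X) : Prop :=
  ∀ (L : List (List (X × Bool))) (S : List (X × Bool)), (∀ u ∈ L, IsPiece R u) →
    (∀ p ∈ S, p.1 ∈ A) → L.flatten ++ S ∈ R → 4 ≤ L.length

open Classical in
/-- The weight of a block in a decomposition of a relator: `1` for a piece, and `2` otherwise. -/
noncomputable def blockWeight (R : Set (List (X × Bool))) (u : List (X × Bool)) : ℕ :=
  if IsPiece R u then 1 else 2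

theorem one_le_blockWeight : 1 ≤ blockWeight R u := by
  unfold blockWeight
  split_ifs <;> simp

theorem length_le_sum_blockWeight (R : Set (List (X × Bool))) (L : List (List (X × Bool))) :
    L.length ≤ (L.map (blockWeight R)).sum := by
  simpa using List.card_nsmul_le_sum (L.map (blockWeight R)) 1
    (List.forall_mem_map.2 fun _ _ => one_le_blockWeight)

theorem two_le_sum_blockWeight (hA : ComplementsNeedFourPieces R A) (hS : ∀ p ∈ S, p.1 ∈ A)
    (hLS : L.flatten ++ S ∈ R) : 2 ≤ (L.map (blockWeight R)).sum := by
  by_cases hpieces : ∀ u ∈ L, IsPiece R u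
  · linarith [hA L S hpieces hS hLS, length_le_sum_blockWeight R L]
  · push Not at hpieces
    obtain ⟨u, hu, hnot⟩ := hpieces
    calc 2 = blockWeight R u := by simp [blockWeight, hnot]
      _ ≤ _ := List.le_sum_of_mem (List.mem_map_of_mem hu)

theorem four_le_sum_blockWeight (hR : Symmetrized R) (hA : ComplementsNeedFourPieces R A)
    (hS : ∀ p ∈ S, p.1 ∈ A) (hL : ∀ u ∈ L, IsPiece R u ∨ ∀ p ∈ u, p.1 ∈ A)
    (hLS : L.flatten ++ S ∈ R) : 4 ≤ (L.map (blockWeight R)).sum := by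
  by_cases hpieces : ∀ u ∈ L, IsPiece R u
  · exact (hA L S hpieces hS hLS).trans (length_le_sum_blockWeight R L)
  push Not at hpieces
  obtain ⟨u, hu, hnot⟩ := hpieces
  have huA := (hL u hu).resolve_left hnot
  obtain ⟨L₁, L₂, rfl⟩ := List.append_of_mem hu
  suffices 2 ≤ (L₁.map (blockWeight R)).sum + (L₂.map (blockWeight R)).sum by
    simp only [List.map_append, List.map_cons, List.sum_append, List.sum_cons, blockWeight, hnot,
      if_false] at this ⊢
    omega
  rcases L₁.eq_nil_or_concat' with rfl | ⟨L₁', v, rfl⟩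
  · have hrot : L₂.flatten ++ (S ++ u) ∈ R :=
      hR.1 _ hLS _ (by simpa using List.isRotated_append (l := u) (l' := L₂.flatten ++ S))
    simpa using two_le_sum_blockWeight hA (List.forall_mem_append.2 ⟨hS, huA⟩) hrot
  rcases L₂ with _ | ⟨w, L₂⟩
  · simpa using two_le_sum_blockWeight hA (List.forall_mem_append.2 ⟨huA, hS⟩)
      (by simpa using hLS : (L₁' ++ [v]).flatten ++ (u ++ S) ∈ R)
  · have := length_le_sum_blockWeight R (L₁' ++ [v])
    have := length_le_sum_blockWeight R (w :: L₂)
    simp only [List.length_append, List.length_cons] at *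
    omega

theorem six_le_sum_blockWeight (hR : Symmetrized R) (hC6 : SmallCancellationC 6 R)
    (hA : ComplementsNeedFourPieces R A) (hL : ∀ u ∈ L, IsPiece R u ∨ ∀ p ∈ u, p.1 ∈ A)
    (hLR : L.flatten ∈ R) : 6 ≤ (L.map (blockWeight R)).sum := by
  by_cases hpieces : ∀ u ∈ L, IsPiece R u
  · exact (hC6 _ hLR L hpieces rfl).trans (length_le_sum_blockWeight R L)
  push Not at hpieces
  obtain ⟨u, hu, hnot⟩ := hpieces
  obtain ⟨L₁, L₂, rfl⟩ := List.append_of_mem hu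
  have hrot : (L₂ ++ L₁).flatten ++ u ∈ R := by
    refine hR.1 _ hLR _ ?_
    simpa using List.isRotated_append (l := L₁.flatten ++ u) (l' := L₂.flatten)
  have hfour := four_le_sum_blockWeight hR hA ((hL u hu).resolve_left hnot)
    (L := L₂ ++ L₁) (fun v hv => hL v (by grind)) hrot
  simp only [List.map_append, List.map_cons, List.sum_append, List.sum_cons, blockWeight, hnot,
    if_false] at hfour ⊢
  omega

theorem exists_flatten_eq {D : Type*} (P : D → Prop) {x : D} (hx : P x) (l : List D) :
    ∃ L : List (List D), L.flatten = l ++ [x] ∧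
      ∀ a ∈ L, a.IsChain (fun y _ => ¬ P y) ∧ ∃ y ∈ a, P y := by
  induction l with
  | nil => exact ⟨[[x]], by simp [hx]⟩
  | cons y l ih =>
    obtain ⟨L, hflatten, hL⟩ := ih
    by_cases hy : P y
    · exact ⟨[y] :: L, by simp [hflatten], List.forall_mem_cons.2 ⟨by simp [hy], hL⟩⟩
    · obtain ⟨a, L, rfl⟩ : ∃ a L', L = a :: L' := List.exists_cons_of_ne_nil <| by
        rintro rfl
        simp at hflatten
      rw [List.forall_mem_cons] at hL
      refine ⟨(y :: a) :: L, by simpa using hflatten, List.forall_mem_cons.2 ⟨⟨?_, ?_⟩, hL.2⟩⟩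
      · exact List.isChain_cons.2 ⟨fun _ _ => hy, hL.1.1⟩
      · simpa [hy] using hL.1.2

end Blocks

section Arcs

namespace SphericalMap

variable {D X : Type*} {M : SphericalMap D X} {R : Set (List (X × Bool))} {A : Set X}
  {d x : D} {l a c o : List D}

/-- The permutation that turns around the end vertices of the darts. -/
def vertex (M : SphericalMap D X) : Perm D := M.edge * M.face

/-- The dart `d` ends at a vertex of degree at least three, assuming that no vertex of the map has
degree one. -/
def Branching (M : SphericalMap D X) (d : D) : Prop := M.vertex (M.vertex d) ≠ d

/-- The list `a` consists of consecutive darts of a face, separated by vertices of degree two. -/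
def IsArc (M : SphericalMap D X) (a : List D) : Prop :=
  a.IsChain fun x y => M.face x = y ∧ ¬ M.Branching x

theorem face_edge_face (hd : ¬ M.Branching d) : M.face (M.edge (M.face d)) = M.edge d :=
  M.edge_eq_iff.1 (not_not.1 hd)

theorem IsArc.isChain_map_edge (h : M.IsArc a) :
    (a.map M.edge).IsChain fun x y => M.face⁻¹ x = y := by
  refine (List.isChain_map _).2 (List.IsChain.imp ?_ h)
  rintro x _ ⟨rfl, hx⟩
  rw [Perm.inv_eq_iff_eq, face_edge_face hx]

theorem IsArc.edge_mem_iff (h : M.IsArc (x :: c)) (ho : M.IsFace o) {y : D} (hy : y ∈ c) :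
    M.edge y ∈ o ↔ M.edge x ∈ o := by
  have hchain : (x :: c).IsChain fun x y => M.edge y ∈ o ↔ M.edge x ∈ o := by
    refine List.IsChain.imp ?_ h
    rintro x _ ⟨rfl, hx⟩
    rw [← face_edge_face hx, ho.1.apply_mem_iff]
  have : IsTrans D fun x y => M.edge y ∈ o ↔ M.edge x ∈ o := ⟨fun _ _ _ h h' => h'.trans h⟩
  exact List.rel_of_pairwise_cons hchain.pairwise hy

theorem IsArc.isPrefix_invRev_word (h : M.IsArc (x :: c)) (hactive : ∀ y ∈ x :: c, M.Active y)
    (hnodup : (x :: c).Nodup) (hl : M.IsFace (M.edge x :: l)) :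
    M.word c <+: FreeGroup.invRev (M.word l) := by
  have hl' : IsCycleList M.face⁻¹ (M.edge x :: l.reverse) :=
    (List.reverse_cons ▸ hl.1.inv).append_comm
  have hc : M.word c = (c.map M.edge).map fun y => letterInv (M.label y) := by
    rw [word, List.map_map]
    refine List.map_congr_left fun y hy => ?_
    rw [Function.comp_apply, M.label_edge y (hactive y (by simp [hy])), letterInv_letterInv]
  have hinv : FreeGroup.invRev (M.word l) = l.reverse.map fun y => letterInv (M.label y) := by
    rw [FreeGroup.invRev, word, List.map_map, List.map_reverse]
    rfl
  rw [hc, hinv]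
  exact (hl'.isPrefix h.isChain_map_edge
    (List.nodup_cons.1 (hnodup.map M.edge.injective)).1).map _

open Classical in
/-- The weight of a dart `d` of an inner face of a diagram with outer boundary `o`: it is nonzero
when an arc of the face ends at `d`, and it is `2` when moreover this arc runs along `o`. -/
noncomputable def innerWeight (M : SphericalMap D X) (o : List D) (d : D) : ℕ :=
  if M.Branching d then if M.edge d ∈ o then 2 else 1 else 0

theorem blockWeight_le_sum_innerWeight
    (hblock : IsPiece R (M.word a) ∨ ∀ y ∈ a, M.edge y ∈ o) (ha : ∃ x ∈ a, M.Branching x) :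
    blockWeight R (M.word a) ≤ (a.map (innerWeight M o)).sum := by
  obtain ⟨x, hx, hbranching⟩ := ha
  calc blockWeight R (M.word a) ≤ innerWeight M o x := by
        simp only [blockWeight, innerWeight, hbranching, if_true]
        split_ifs with hpiece hxo hxo
        · simp
        · simp
        · simp
        · exact absurd (hblock.resolve_left hpiece x hx) hxo
    _ ≤ _ := List.le_sum_of_mem (List.mem_map_of_mem hx)

namespace IsMinimalCounterexample

theorem forall_mem_word_of_edge_mem (h : M.IsMinimalCounterexample R A o)
    (ha : ∀ y ∈ a, M.edge y ∈ o) : ∀ p ∈ M.word a, p.1 ∈ A := by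
  refine List.forall_mem_map.2 fun y hy => ?_
  have hactive := h.diagram.outer.2 _ (ha y hy)
  have hmem := h.letters _ (ha y hy)
  rwa [← M.edge_edge y, M.label_edge _ hactive]

variable [Finite D]

theorem cons_invRev_word_mem (h : M.IsMinimalCounterexample R A o) (hR : Symmetrized R)
    (hred : ∀ w ∈ R, FreeGroup.IsReduced w) (hx : M.Active x) (hl : M.IsFace (M.edge x :: l))
    (hexo : M.edge x ∉ o) : M.label x :: FreeGroup.invRev (M.word l) ∈ R := by
  have hinv := hR.2 _ (h.word_mem hR hred hl List.mem_cons_self hexo)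
  have hsplit : wordInv (M.word (M.edge x :: l)) =
      FreeGroup.invRev (M.word l) ++ [M.label x] := by
    rw [word, List.map_cons, M.label_edge x hx]
    simp [wordInv, FreeGroup.invRev, word, letterInv]
  exact hR.1 _ (hsplit ▸ hinv) _ List.isRotated_append

theorem isPiece_word (h : M.IsMinimalCounterexample R A o) (hR : Symmetrized R)
    (hred : ∀ w ∈ R, FreeGroup.IsReduced w) (harc : M.IsArc (x :: c)) (hl : M.IsFace l)
    (hsub : x :: c <:+: l) (hxo : x ∉ o) (hexo : M.edge x ∉ o) : IsPiece R (M.word (x :: c)) := by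
  have hactive (y : D) (hy : y ∈ x :: c) : M.Active y := hl.2 y (hsub.subset hy)
  have hx := hactive x List.mem_cons_self
  have hnodup : (x :: c).Nodup := hl.1.1.sublist hsub.sublist
  obtain ⟨l₁, h₁⟩ := M.exists_isFace hx
  obtain ⟨l₂, h₂⟩ := M.exists_isFace hx.edge
  have hprefix : c <+: l₁ :=
    h₁.1.isPrefix (harc.imp fun _ _ h => h.1) (List.nodup_cons.1 hnodup).1
  have hprefix' : M.word c <+: FreeGroup.invRev (M.word l₂) :=
    harc.isPrefix_invRev_word hactive hnodup h₂
  refine ⟨by simp [word], _, _, h.word_mem hR hred h₁ List.mem_cons_self hxo,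
    h.cons_invRev_word_mem hR hred hx h₂ hexo, fun heq => ?_,
    List.cons_prefix_cons.2 ⟨rfl, hprefix.map _⟩, List.cons_prefix_cons.2 ⟨rfl, hprefix'⟩⟩
  exact h.word_ne_invRev hR hred hxo hexo h₁ h₂ (List.cons.inj heq).2

theorem isPiece_or_edge_mem (h : M.IsMinimalCounterexample R A o) (hR : Symmetrized R)
    (hred : ∀ w ∈ R, FreeGroup.IsReduced w) (harc : M.IsArc a) (hne : a ≠ []) (hl : M.IsFace l)
    (hsub : a <:+: l) (hlo : l.Disjoint o) : IsPiece R (M.word a) ∨ ∀ y ∈ a, M.edge y ∈ o := by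
  obtain ⟨x, c, rfl⟩ := List.exists_cons_of_ne_nil hne
  by_cases hexo : M.edge x ∈ o
  · refine Or.inr (List.forall_mem_cons.2 ⟨hexo, fun y hy => ?_⟩)
    exact (harc.edge_mem_iff h.diagram.outer hy).2 hexo
  · exact Or.inl (h.isPiece_word hR hred harc hl hsub
      (fun hxo => hlo (hsub.subset List.mem_cons_self) hxo) hexo)

theorem exists_branching (h : M.IsMinimalCounterexample R A o) (hR : Symmetrized R)
    (hred : ∀ w ∈ R, FreeGroup.IsReduced w) (hC6 : SmallCancellationC 6 R)
    (hA : ComplementsNeedFourPieces R A) (hl : M.IsFace (d :: l)) (hlo : (d :: l).Disjoint o) :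
    ∃ x ∈ d :: l, M.Branching x := by
  by_contra! hnot
  have harc : M.IsArc (d :: l) :=
    hl.1.isChain.imp_of_mem_imp fun x y hx _ hxy => ⟨hxy, hnot x hx⟩
  have hblock := h.isPiece_or_edge_mem hR hred harc (by simp) hl (List.infix_refl _) hlo
  have hword := h.word_mem hR hred hl List.mem_cons_self (hlo List.mem_cons_self)
  have hsix := six_le_sum_blockWeight hR hC6 hA (L := [M.word (d :: l)])
    (by simpa using hblock.imp_right h.forall_mem_word_of_edge_mem) (by simpa using hword)
  have hle : blockWeight R (M.word (d :: l)) ≤ 2 := by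
    unfold blockWeight
    split_ifs <;> simp
  simp only [List.map_cons, List.map_nil, List.sum_cons, List.sum_nil] at hsix
  omega

theorem six_le_sum_innerWeight (h : M.IsMinimalCounterexample R A o) (hR : Symmetrized R)
    (hred : ∀ w ∈ R, FreeGroup.IsReduced w) (hC6 : SmallCancellationC 6 R)
    (hA : ComplementsNeedFourPieces R A) (hl : M.IsFace (d :: l)) (hdo : d ∉ o) :
    6 ≤ ((d :: l).map (innerWeight M o)).sum := by
  have hlo : (d :: l).Disjoint o := fun _ hx hxo =>
    hdo (hl.subset h.diagram.outer hx hxo List.mem_cons_self)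
  obtain ⟨x, hx, hbranching⟩ := h.exists_branching hR hred hC6 hA hl hlo
  obtain ⟨s, t, hst⟩ := List.append_of_mem hx
  have hrot : d :: l ~r (t ++ s) ++ [x] := by
    simpa [hst] using List.isRotated_append (l := s ++ [x]) (l' := t)
  have hl' := hl.isRotated hrot
  obtain ⟨L, hflatten, hL⟩ := exists_flatten_eq M.Branching hbranching (t ++ s)
  rw [← hflatten] at hl' hrot
  have hblock (a : List D) (ha : a ∈ L) : IsPiece R (M.word a) ∨ ∀ y ∈ a, M.edge y ∈ o := by
    obtain ⟨hchain, y, hy, -⟩ := hL a ha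
    have hsub : a <:+: L.flatten := List.infix_of_mem_flatten ha
    refine h.isPiece_or_edge_mem hR hred ?_ (List.ne_nil_of_mem hy) hl' hsub
      fun z hz => hlo (hrot.mem_iff.2 hz)
    have hface := hl'.1.isChain.infix hsub
    rw [List.isChain_iff_getElem] at hface hchain
    exact List.isChain_iff_getElem.2 fun i hi => ⟨hface i hi, hchain i hi⟩
  have hword : (L.map M.word).flatten = M.word L.flatten := List.map_flatten.symm
  calc 6 ≤ ((L.map M.word).map (blockWeight R)).sum := by
        refine six_le_sum_blockWeight hR hC6 hA (List.forall_mem_map.2 fun a ha => ?_) ?_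
        · exact (hblock a ha).imp_right h.forall_mem_word_of_edge_mem
        · rw [hword]
          exact h.word_mem hR hred hl' (hrot.mem_iff.1 List.mem_cons_self) hdo
    _ ≤ (L.map fun a => (a.map (innerWeight M o)).sum).sum := by
        rw [List.map_map]
        exact List.sum_le_sum fun a ha => blockWeight_le_sum_innerWeight (hblock a ha) (hL a ha).2
    _ = ((d :: l).map (innerWeight M o)).sum := by
        rw [(hrot.perm.map _).sum_eq, List.map_flatten, List.sum_flatten, List.map_map]
        rfl

end IsMinimalCounterexample

end SphericalMap

end Arcs

section Curvature

open Classical in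
theorem mul_cycleCount_le_sum {D : Type*} [Fintype D] {σ : Perm D} {w : D → ℕ} {c : ℕ}
    (h : ∀ d, ∃ l, IsCycleList σ l ∧ d ∈ l ∧ c ≤ (l.map w).sum) :
    c * cycleCount σ ≤ ∑ d, w d := by
  have hfiber (q : Quotient (Perm.SameCycle.setoid σ)) :
      c ≤ ∑ d with Quotient.mk _ d = q, w d := by
    induction q using Quotient.inductionOn with | _ d
    obtain ⟨l, hl, hdl, hc⟩ := h d
    rw [← List.sum_toFinset _ hl.1] at hc
    refine hc.trans (Finset.sum_le_sum_of_subset fun x hx => ?_)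
    exact Finset.mem_filter_univ _ |>.2 (Quotient.sound (hl.sameCycle (List.mem_toFinset.1 hx) hdl))
  calc c * cycleCount σ = ∑ _q : Quotient (Perm.SameCycle.setoid σ), c := by
        rw [cycleCount, Nat.card_eq_fintype_card, Finset.sum_const, Finset.card_univ, smul_eq_mul,
          mul_comm]
    _ ≤ ∑ q : Quotient (Perm.SameCycle.setoid σ), ∑ d with Quotient.mk _ d = q, w d :=
        Finset.sum_le_sum fun q _ => hfiber q
    _ = ∑ d, w d := Finset.sum_fiberwise _ _ _

open Classical in
theorem mul_cycleCount_le_add_sum {D : Type*} [Fintype D] {σ : Perm D} {w : D → ℕ} {c : ℕ}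
    {P : D → Prop} (hσ : ∀ d, ¬ P d → σ d = d)
    (h : ∀ d, P d → ∃ l, IsCycleList σ (d :: l) ∧ c ≤ ((d :: l).map w).sum) :
    c * cycleCount σ ≤ c * Finset.card {d | ¬ P d} + ∑ d with P d, w d := by
  have hsum := mul_cycleCount_le_sum (σ := σ) (w := fun d => if P d then w d else c) (c := c)
    fun d => ?_
  · rw [Finset.sum_ite, Finset.sum_const, smul_eq_mul] at hsum
    linarith
  · by_cases hd : P d
    · obtain ⟨l, hl, hc⟩ := h d hd
      refine ⟨d :: l, hl, List.mem_cons_self, hc.trans_eq (congrArg List.sum ?_)⟩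
      refine List.map_congr_left fun x hx => (if_pos ?_).symm
      exact hl.forall_mem hσ List.mem_cons_self hd x hx
    · exact ⟨[d], isCycleList_singleton.2 (hσ d hd), by simp, by simp [hd]⟩

namespace SphericalMap

variable {D X : Type*} {M : SphericalMap D X} {R : Set (List (X × Bool))} {A : Set X}
  {d o₀ : D} {l o : List D}

theorem vertex_of_not_active (h : ¬ M.Active d) : M.vertex d = d := by
  rw [vertex, Perm.mul_apply, M.face_of_not_active h, not_not.1 h]

theorem branching_vertex_iff : M.Branching (M.vertex d) ↔ M.Branching d :=
  M.vertex.injective.ne_iff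

open Classical in
/-- The weight of a dart in the count of the vertices: a vertex gets at least `6` from the darts
ending there, whether it has degree two or more. -/
noncomputable def vertexWeight (M : SphericalMap D X) (d : D) : ℕ := if M.Branching d then 2 else 3

open Classical in
/-- The weight of a dart in the count of the faces: every face gets at least `6` from its darts,
and the outer face `o` gets it from the single dart `o₀`. -/
noncomputable def faceWeight (M : SphericalMap D X) (o : List D) (o₀ d : D) : ℕ :=
  if d ∈ o then if d = o₀ then 6 else 0 else M.innerWeight o d

theorem six_le_sum_vertexWeight (hl : IsCycleList M.vertex (d :: l)) (hd : M.vertex d ≠ d) :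
    6 ≤ ((d :: l).map M.vertexWeight).sum := by
  have htwo (x : D) : 2 ≤ M.vertexWeight x := by
    unfold vertexWeight
    split_ifs <;> simp
  match l with
  | [] => exact absurd (isCycleList_singleton.1 hl) hd
  | [a] =>
    have hda : M.vertex d = a := hl.apply_eq
    have had : M.vertex a = d := (hl.append_comm (s := [d]) (t := [a])).apply_eq
    simp [vertexWeight, Branching, hda, had]
  | a :: b :: l =>
    simp only [List.map_cons, List.sum_cons]
    have := htwo d
    have := htwo a
    have := htwo b
    omega

section WeightSums

variable [Fintype D]

open Classical in
theorem card_active_add_le (hd : M.Active d) :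
    Finset.card {x | M.Active x} + 3 * Finset.card {x | ¬ M.Active x} + 2 ≤
      cycleCount M.edge + cycleCount M.face + cycleCount M.vertex := by
  have hcomponents : Finset.card {x | ¬ M.Active x} + 1 ≤
      Nat.card (Quotient (component M.edge M.face)) := by
    rw [← Fintype.card_subtype, ← Nat.card_eq_fintype_card, ← Finite.card_option]
    refine card_le_card_quotient (g := fun x => if h : M.Active x then none else some ⟨x, h⟩)
      (fun o => ?_) (component_le_iff.2 ⟨fun x => ?_, fun x => ?_⟩)
    · rcases o with _ | ⟨x, hx⟩
      · exact ⟨d, dif_pos hd⟩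
      · exact ⟨x, dif_neg hx⟩
    · by_cases hx : M.Active x
      · simp [Setoid.ker_def, hx, hx.edge]
      · rw [not_not.1 hx]
    · by_cases hx : M.Active x
      · simp [Setoid.ker_def, hx, hx.face]
      · rw [M.face_of_not_active hx]
  have hcard : Finset.card {x | M.Active x} + Finset.card {x | ¬ M.Active x} =
      (Finset.univ : Finset D).card := Finset.card_filter_add_card_filter_not _
  have hplanar := M.planar
  rw [Planar, Nat.card_eq_fintype_card, ← Finset.card_univ] at hplanar
  rw [vertex]
  omega

open Classical in
theorem card_branching_le (ho : M.IsFace o) :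
    Finset.card {x | M.Active x ∧ x ∉ o ∧ M.Branching x ∧ M.edge x ∈ o} ≤
      Finset.card {x | M.Active x ∧ x ∈ o ∧ M.Branching x} := by
  refine Finset.card_le_card_of_injOn (⇑M.vertex⁻¹) (fun x hx => ?_) M.vertex⁻¹.injective.injOn
  simp only [Finset.coe_filter, Finset.mem_univ, true_and, Set.mem_ofPred_eq] at hx ⊢
  obtain ⟨-, -, hbranching, hmem⟩ := hx
  obtain ⟨y, rfl⟩ := M.vertex.surjective x
  rw [← Perm.mul_apply, inv_mul_cancel, Perm.one_apply]
  rw [vertex, Perm.mul_apply, M.edge_edge, ho.1.apply_mem_iff] at hmem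
  exact ⟨ho.2 y hmem, hmem, branching_vertex_iff.1 hbranching⟩

open Classical in
theorem sum_faceWeight_add_vertexWeight_le (ho : M.IsFace o) (ho₀ : o₀ ∈ o) :
    ∑ d with M.Active d, M.faceWeight o o₀ d + ∑ d with M.Active d, M.vertexWeight d ≤
      3 * Finset.card {d | M.Active d} + 6 := by
  have hpointwise (d : D) : M.faceWeight o o₀ d + M.vertexWeight d +
        (if d ∈ o ∧ M.Branching d then 1 else 0) = 3 + (if d = o₀ then 6 else 0) +
        if d ∉ o ∧ M.Branching d ∧ M.edge d ∈ o then 1 else 0 := by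
    unfold faceWeight vertexWeight innerWeight
    by_cases hdo : d ∈ o
    · simp only [hdo, if_true, true_and, not_true_eq_false, false_and, if_false]
      split_ifs <;> rfl
    · have hd : d ≠ o₀ := fun h => hdo (h ▸ ho₀)
      by_cases hbranching : M.Branching d <;> by_cases hed : M.edge d ∈ o <;> simp [*]
  have hsum := Finset.sum_congr (rfl : ({d | M.Active d} : Finset D) = _) fun d _ => hpointwise d
  simp only [Finset.sum_add_distrib, Finset.sum_boole, Finset.filter_filter, Finset.sum_const,
    smul_eq_mul, Nat.cast_id, Finset.sum_ite_eq', Finset.mem_filter_univ, ho.2 o₀ ho₀,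
    if_true] at hsum
  have hcard := card_branching_le ho
  omega

open Classical in
theorem two_mul_cycleCount_edge_le (M : SphericalMap D X) :
    2 * cycleCount M.edge ≤
      2 * Finset.card {x | ¬ M.Active x} + Finset.card {x | M.Active x} := by
  rw [Finset.card_eq_sum_ones {x | M.Active x}]
  refine mul_cycleCount_le_add_sum (fun d => not_not.1) fun d hd => ⟨[M.edge d], ?_, by simp⟩
  simpa [isCycleList_cons, M.edge_edge] using Ne.symm hd

open Classical in
theorem IsMinimalCounterexample.six_mul_cycleCount_face_le (h : M.IsMinimalCounterexample R A o)
    (hR : Symmetrized R) (hred : ∀ w ∈ R, FreeGroup.IsReduced w)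
    (hC6 : SmallCancellationC 6 R) (hA : ComplementsNeedFourPieces R A) (ho₀ : o₀ ∈ o) :
    6 * cycleCount M.face ≤
      6 * Finset.card {x | ¬ M.Active x} + ∑ d with M.Active d, M.faceWeight o o₀ d := by
  refine mul_cycleCount_le_add_sum (fun d => M.face_of_not_active) fun d hd => ?_
  obtain ⟨l, hl⟩ := M.exists_isFace hd
  refine ⟨l, hl.1, ?_⟩
  by_cases hdo : d ∈ o
  · have ho₀l : o₀ ∈ d :: l := h.diagram.outer.subset hl hdo List.mem_cons_self ho₀
    calc 6 = M.faceWeight o o₀ o₀ := by simp [faceWeight, ho₀]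
      _ ≤ _ := List.le_sum_of_mem (List.mem_map_of_mem ho₀l)
  · refine (h.six_le_sum_innerWeight hR hred hC6 hA hl hdo).trans_eq (congrArg List.sum ?_)
    refine List.map_congr_left fun x hx => (if_neg fun hxo => hdo ?_).symm
    exact hl.subset h.diagram.outer hx hxo List.mem_cons_self

open Classical in
theorem IsMinimalCounterexample.six_mul_cycleCount_vertex_le
    (h : M.IsMinimalCounterexample R A o) (hR : Symmetrized R)
    (hred : ∀ w ∈ R, FreeGroup.IsReduced w) :
    6 * cycleCount M.vertex ≤
      6 * Finset.card {x | ¬ M.Active x} + ∑ d with M.Active d, M.vertexWeight d := by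
  refine mul_cycleCount_le_add_sum (fun d => vertex_of_not_active) fun d hd => ?_
  obtain ⟨l, hl⟩ := exists_isCycleList M.vertex d
  refine ⟨l, hl, six_le_sum_vertexWeight hl fun hvertex => ?_⟩
  refine h.label_face_ne hR hred hd ?_
  rw [M.edge_eq_iff.1 hvertex, M.label_edge d hd]

end WeightSums

theorem not_isMinimalCounterexample [Finite D] (hR : Symmetrized R)
    (hred : ∀ w ∈ R, FreeGroup.IsReduced w) (hC6 : SmallCancellationC 6 R)
    (hA : ComplementsNeedFourPieces R A) : ¬ M.IsMinimalCounterexample R A o := by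
  intro h
  have := Fintype.ofFinite D
  have hne : o ≠ [] := by
    rintro rfl
    exact h.nontrivial rfl
  obtain ⟨o₀, ho₀⟩ := List.exists_mem_of_ne_nil o hne
  have hEuler := card_active_add_le (h.diagram.outer.2 o₀ ho₀)
  have hedges := M.two_mul_cycleCount_edge_le
  have hfaces := h.six_mul_cycleCount_face_le hR hred hC6 hA ho₀
  have hvertices := h.six_mul_cycleCount_vertex_le hR hred
  have hweights := sum_faceWeight_add_vertexWeight_le h.diagram.outer ho₀
  omega

end SphericalMap

end Curvature

section Freeness

variable {X : Type*} {R : Set (List (X × Bool))} {A : Set X} {w : List (X × Bool)}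

theorem mk_eq_one_of_mem_normalClosure (hne : ∀ w ∈ R, w ≠ []) (hR : Symmetrized R)
    (hred : ∀ w ∈ R, FreeGroup.IsReduced w) (hC6 : SmallCancellationC 6 R)
    (hA : ComplementsNeedFourPieces R A) (hw : ∀ p ∈ w, p.1 ∈ A)
    (hmem : FreeGroup.mk w ∈ Subgroup.normalClosure (FreeGroup.mk '' R)) :
    FreeGroup.mk w = 1 := by
  by_contra hnontrivial
  obtain ⟨D, hD, M, o, hM, rfl⟩ := BoundsDiagram.of_mem_normalClosure hne hR.2 hmem
  have hcounterexample : M.IsCounterexample R A o :=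
    ⟨hM.mono Set.subset_union_left, fun d hd => hw _ (List.mem_map_of_mem hd), hnontrivial⟩
  obtain ⟨M', o', hmin⟩ := hcounterexample.exists_minimal
  exact SphericalMap.not_isMinimalCounterexample hR hred hC6 hA hmin

end Freeness

end SmallCancellation

/-- **Theorem `thm:small` (`C(6)` case).**  Let `R` be a symmetrized set of nonempty
reduced, cyclically reduced words satisfying `C(6)`, and let `A ⊆ X`.  If there do not
exist words `Q` and `S` such that `S` uses only letters of `A`, the concatenation
`Q ++ S` lies in `R`, and `Q` is a concatenation of at most `3` pieces, then the
natural homomorphism from the free group on `A` to `G = ⟨X ∣ R⟩` is injective. -/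
theorem small_cancellation_freeness {X : Type*}
    (R : Set (List (X × Bool)))
    (hRne : ∀ w ∈ R, w ≠ []) (hRred : ∀ w ∈ R, WordReduced w)
    (hRcyc : ∀ w ∈ R, WordCyclicallyReduced w)
    (hRsym : Symmetrized R)
    (hC6 : SmallCancellationC 6 R)
    (A : Set X)
    (hno : ¬ ∃ Q S : List (X × Bool),
      (∀ p ∈ S, p.1 ∈ A) ∧ Q ++ S ∈ R ∧
        ∃ L : List (List (X × Bool)),
          (∀ u ∈ L, IsPiece R u) ∧ L.length ≤ 3 ∧ L.flatten = Q) :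
    Function.Injective
      (FreeGroup.lift (fun a : A =>
        (PresentedGroup.of (a : X) :
          PresentedGroup (FreeGroup.mk '' R : Set (FreeGroup X)))) :
        FreeGroup A →* PresentedGroup (FreeGroup.mk '' R : Set (FreeGroup X))) := by
  have hcomp : FreeGroup.lift (fun a : A => PresentedGroup.of (a : X)) =
      (PresentedGroup.mk (FreeGroup.mk '' R)).comp (FreeGroup.map Subtype.val) := by
    ext a
    simp [PresentedGroup.of]
  have hred : ∀ w ∈ R, FreeGroup.IsReduced w := fun w hw =>
    (hRred w hw).imp fun _ _ h h' => by simpa [h'] using h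
  have hA : SmallCancellation.ComplementsNeedFourPieces R A := fun L S hL hS hLS =>
    not_lt.1 fun hlen => hno ⟨L.flatten, S, hS, hLS, L, hL, Nat.le_of_lt_succ hlen, rfl⟩
  rw [hcomp, injective_iff_map_eq_one]
  intro g hg
  obtain ⟨u, rfl⟩ : ∃ u, FreeGroup.mk u = g := Quot.exists_rep g
  refine FreeGroup.map_injective Subtype.val_injective (Eq.trans ?_ (map_one _).symm)
  rw [FreeGroup.map.mk]
  refine SmallCancellation.mk_eq_one_of_mem_normalClosure hRne hRsym hred hC6 hA ?_
    ((QuotientGroup.eq_one_iff _).1 hg)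
  exact List.forall_mem_map.2 fun p _ => p.1.2
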